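/- Let 𝔾 be a discrete quantum group of Kac type and let E be a conditional expectation of B(L²(𝔾)) onto L∞(𝔾̂). Then m := φ̂ ∘ E|_{L∞(𝔾)} is a left-invariant mean on L∞(𝔾), where φ̂ is the (tracial) Haar state of the compact dual 𝔾̂. -/

import Mathlib

/-!
Common framework: an axiomatization of locally compact quantum groups (in the von Neumann
algebraic setting of Kustermans–Vaes) acting on a Hilbert space `H = L²(𝔾)`.

Since completed Hilbert space tensor products are not available, the tensor square
`H2 = L²(𝔾) ⊗ L²(𝔾)` is axiomatized: a Hilbert space together with a bilinear map
`tmul` with total range satisfying `⟪a ⊗ b, c ⊗ d⟫ = ⟪a, c⟫⟪b, d⟫`, the induced tensor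
product of operators `tensorOp`, tensor products `funcTensor` of normal functionals,
and the slice maps `sliceL = ω ⊗ id`, `sliceR = id ⊗ ω`.

Normal functionals (elements of the predual `B(H)_*`) are characterized concretely:
`ω(x) = ∑ ⟪ηₙ, x ξₙ⟫` with `∑‖ξₙ‖² , ∑‖ηₙ‖² < ∞`.

Membership of an operator `X` on `H2` in a spatial tensor product `P ⊗̄ Q` of von Neumann
algebras is encoded, via the commutation theorem, as: `X` commutes with all `a' ⊗ b'`
with `a' ∈ P'`, `b' ∈ Q'`.

A locally compact quantum group is recorded through its left regular co-representation
`W ∈ L∞(𝔾) ⊗̄ L∞(𝔾̂)` and right regular co-representation `V ∈ L∞(𝔾̂)' ⊗̄ L∞(𝔾)`,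
which implement the co-multiplication: `Δ(x) = W*(1 ⊗ x)W = V(x ⊗ 1)V*` for `x ∈ L∞(𝔾)`;
`Δ̄(x) := W*(1 ⊗ x)W` for arbitrary `x ∈ B(H)` is the canonical normal extension of `Δ`.
-/

noncomputable section

open scoped ComplexOrder ComplexInnerProductSpace

namespace LCQGNote

/-- The bounded operators `B(H)`. -/
abbrev B (H : Type*) [NormedAddCommGroup H] [InnerProductSpace ℂ H] : Type _ := H →L[ℂ] H

variable (H H2 : Type*)
  [NormedAddCommGroup H] [InnerProductSpace ℂ H] [CompleteSpace H]
  [NormedAddCommGroup H2] [InnerProductSpace ℂ H2] [CompleteSpace H2]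

/-- The vector functional `ω_{ξ,η} : x ↦ ⟨x ξ, η⟩` on `B(H)` (written here in the
Mathlib convention for inner products, which are conjugate-linear in the first slot). -/
def vecFunctional (ξ η : H) : B H →ₗ[ℂ] ℂ where
  toFun x := ⟪η, x ξ⟫
  map_add' x y := by simp [inner_add_right]
  map_smul' c x := by simp [inner_smul_right]

/-- A functional on `B(H)` is normal (σ-weakly continuous, i.e. belongs to the predual
`B(H)_*`) iff it has the form `x ↦ ∑ ⟪ηₙ, x ξₙ⟫` with `(ξₙ), (ηₙ)` square-summable. -/
def IsNormalFunctional (ω : B H →ₗ[ℂ] ℂ) : Prop :=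
  ∃ ξ η : ℕ → H, Summable (fun n => ‖ξ n‖ ^ 2) ∧ Summable (fun n => ‖η n‖ ^ 2) ∧
    ∀ x : B H, HasSum (fun n => ⟪η n, x (ξ n)⟫) (ω x)

/-- `φ` is a state of the von Neumann algebra `N ⊆ B(H)`: it is unital and positive on `N`.
(Functionals on `N` are encoded as functionals on `B(H)`; only the restriction to `N`
matters, by the Hahn–Banach extension theorem.) -/
def IsStateOn (N : VonNeumannAlgebra H) (φ : B H →ₗ[ℂ] ℂ) : Prop :=
  φ 1 = 1 ∧ ∀ x : B H, x ∈ N → x.IsPositive → 0 ≤ φ x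

/-- A conditional expectation of `B(H)` onto a von Neumann subalgebra `N`:
a unital positive projection `E : B(H) → B(H)` with range `N`. -/
structure IsConditionalExpectation (N : VonNeumannAlgebra H) (E : B H →ₗ[ℂ] B H) : Prop where
  unital : E 1 = 1
  positive : ∀ x : B H, x.IsPositive → (E x).IsPositive
  mem_range : ∀ x : B H, E x ∈ N
  fixes : ∀ x ∈ N, E x = x

/-- The center of a von Neumann algebra `N`: elements of `N` commuting with all of `N`. -/
def center (N : VonNeumannAlgebra H) : Set (B H) := {z | z ∈ N ∧ ∀ y ∈ N, z * y = y * z}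

/-- A von Neumann algebra `N ⊆ B(H)` is injective if there is a conditional expectation
of `B(H)` onto `N`. -/
def IsInjectiveVNA (N : VonNeumannAlgebra H) : Prop :=
  ∃ E : B H →ₗ[ℂ] B H, IsConditionalExpectation H N E

/-- A locally compact quantum group `𝔾`, axiomatized over its Hilbert space `H = L²(𝔾)`
together with the tensor square `H2 = L²(𝔾) ⊗ L²(𝔾)`.  `M = L∞(𝔾)`, `Mhat = L∞(𝔾̂)`
(both acting canonically on `L²(𝔾)`). -/
structure LCQG where
  /-- `L∞(𝔾)` -/
  M : VonNeumannAlgebra H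
  /-- `L∞(𝔾̂)`, the dual von Neumann algebra, also acting on `L²(𝔾)` -/
  Mhat : VonNeumannAlgebra H
  /-- the tensor map `H × H → H2 = H ⊗ H` -/
  tmul : H →ₗ[ℂ] H →ₗ[ℂ] H2
  tmul_inner : ∀ a b c d : H, ⟪tmul a b, tmul c d⟫ = ⟪a, c⟫ * ⟪b, d⟫
  tmul_total : (Submodule.span ℂ {v : H2 | ∃ a b, v = tmul a b}).topologicalClosure = ⊤
  /-- the tensor product of operators: `tensorOp x y = x ⊗ y` on `H2` -/
  tensorOp : B H →ₗ[ℂ] B H →ₗ[ℂ] B H2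
  tensorOp_apply : ∀ (x y : B H) (a b : H), tensorOp x y (tmul a b) = tmul (x a) (y b)
  /-- the flip (tensor swap) unitary `Σ` on `H2` -/
  flipU : B H2
  flipU_apply : ∀ a b : H, flipU (tmul a b) = tmul b a
  /-- the tensor product `ω ⊗ ρ` of (normal) functionals -/
  funcTensor : (B H →ₗ[ℂ] ℂ) → (B H →ₗ[ℂ] ℂ) → (B H2 →ₗ[ℂ] ℂ)
  funcTensor_elem : ∀ ω ρ (x y : B H), funcTensor ω ρ (tensorOp x y) = ω x * ρ y
  funcTensor_normal : ∀ ω ρ, IsNormalFunctional H ω → IsNormalFunctional H ρ →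
    IsNormalFunctional H2 (funcTensor ω ρ)
  /-- the left slice map `sliceL ω = ω ⊗ id : B(H2) → B(H)` -/
  sliceL : (B H →ₗ[ℂ] ℂ) → B H2 →ₗ[ℂ] B H
  /-- the right slice map `sliceR ω = id ⊗ ω : B(H2) → B(H)` -/
  sliceR : (B H →ₗ[ℂ] ℂ) → B H2 →ₗ[ℂ] B H
  sliceL_char : ∀ ω X (ξ η : H),
    vecFunctional H ξ η (sliceL ω X) = funcTensor ω (vecFunctional H ξ η) X
  sliceR_char : ∀ ω X (ξ η : H),
    vecFunctional H ξ η (sliceR ω X) = funcTensor (vecFunctional H ξ η) ω X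
  /-- the left regular co-representation `W` -/
  W : B H2
  W_unitary_l : star W * W = 1
  W_unitary_r : W * star W = 1
  /-- `W ∈ L∞(𝔾) ⊗̄ L∞(𝔾̂)` (via the commutation theorem for tensor products) -/
  W_mem : ∀ a' ∈ M.commutant, ∀ b' ∈ Mhat.commutant, Commute W (tensorOp a' b')
  /-- the right regular co-representation `V` -/
  V : B H2
  V_unitary_l : star V * V = 1
  V_unitary_r : V * star V = 1
  /-- `V ∈ L∞(𝔾̂)' ⊗̄ L∞(𝔾)` (via the commutation theorem for tensor products) -/
  V_mem : ∀ a ∈ Mhat, ∀ b' ∈ M.commutant, Commute V (tensorOp a b')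
  /-- `Δ` maps `L∞(𝔾)` into `L∞(𝔾) ⊗̄ L∞(𝔾)` -/
  Delta_mem : ∀ x ∈ M, ∀ a' ∈ M.commutant, ∀ b' ∈ M.commutant,
    Commute (star W * tensorOp 1 x * W) (tensorOp a' b')
  /-- `V` also implements the co-multiplication: `Δ(x) = V(x ⊗ 1)V*` on `L∞(𝔾)` -/
  Delta_V : ∀ x ∈ M, star W * tensorOp 1 x * W = V * tensorOp x 1 * star V
  /-- slices of `Δ(x)`, `x ∈ L∞(𝔾)`, lie in `L∞(𝔾)` -/
  slice_Delta_mem : ∀ ω, ∀ x ∈ M, sliceL ω (star W * tensorOp 1 x * W) ∈ M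
  /-- slices `(ω ⊗ id)(V (x ⊗ 1) V*)` lie in `L∞(𝔾)`, since `V ∈ L∞(𝔾̂)' ⊗̄ L∞(𝔾)` -/
  sliceL_rConj_mem : ∀ ω (x : B H), sliceL ω (V * tensorOp x 1 * star V) ∈ M
  /-- the fixed-point characterization `L∞(𝔾̂) = {y : V(y ⊗ 1)V* = y ⊗ 1}`
  (cf. Kustermans–Vaes, proof of Proposition 4.2) -/
  fixedPoint_mem : ∀ y : B H, V * tensorOp y 1 * star V = tensorOp y 1 → y ∈ Mhat

namespace LCQG

variable {H H2} (Q : LCQG H H2)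

/-- The (extended) co-multiplication `Δ̄ : B(L²(𝔾)) → L∞(𝔾) ⊗̄ B(L²(𝔾))`,
`Δ̄(x) = W*(1 ⊗ x)W`; its restriction to `L∞(𝔾)` is the co-multiplication `Δ`. -/
def Delta (x : B H) : B H2 := star Q.W * Q.tensorOp 1 x * Q.W

/-- The map `x ↦ V (x ⊗ 1) V*` on `B(L²(𝔾))`. -/
def rConj : B H →ₗ[ℂ] B H2 where
  toFun x := Q.V * Q.tensorOp x 1 * star Q.V
  map_add' x y := by simp [mul_add, add_mul]
  map_smul' c x := by simp [mul_smul_comm, smul_mul_assoc]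

/-- The left regular co-representation of the dual: `Ŵ = Σ W* Σ` (i.e. `σ(W)*`). -/
def What : B H2 := Q.flipU * star Q.W * Q.flipU

/-- The (extended) co-multiplication of the dual quantum group, `Δ̂(y) = Ŵ*(1 ⊗ y)Ŵ`. -/
def Deltahat (y : B H) : B H2 := star Q.What * Q.tensorOp 1 y * Q.What

/-- `m` is a left-invariant mean on `L∞(𝔾)`: a state with
`m((ω ⊗ id)Δ(x)) = ω(1) m(x)` for all `x ∈ L∞(𝔾)` and normal `ω ∈ L¹(𝔾)`. -/
def IsLeftInvariantMean (m : B H →ₗ[ℂ] ℂ) : Prop :=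
  IsStateOn H Q.M m ∧
    ∀ x ∈ Q.M, ∀ ω : B H →ₗ[ℂ] ℂ, IsNormalFunctional H ω →
      m (Q.sliceL ω (Q.Delta x)) = ω 1 * m x

/-- `𝔾` is amenable if it admits a left-invariant mean. -/
def Amenable : Prop := ∃ m : B H →ₗ[ℂ] ℂ, Q.IsLeftInvariantMean m

/-- `𝔾` is quantum injective if there is a conditional expectation of `B(L²(𝔾))` onto
`L∞(𝔾)` mapping `L∞(𝔾̂)` into the center of `L∞(𝔾)`. -/
def QuantumInjective : Prop :=
  ∃ E : B H →ₗ[ℂ] B H, IsConditionalExpectation H Q.M E ∧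
    ∀ x ∈ Q.Mhat, E x ∈ center H Q.M

end LCQG

/-- A discrete quantum group `𝔾` of Kac type: a locally compact quantum group whose dual
`𝔾̂` is compact — i.e. it possesses a (bi-invariant, normal) Haar state `φ̂` on
`L∞(𝔾̂)` — such that `φ̂` is moreover a trace (Kac type).  The GNS construction of
`(L∞(𝔾̂), φ̂)` is canonically realized on `L²(𝔾)`, with GNS map `Λ = Λ_{φ̂}`. -/
structure DiscreteKacQG extends LCQG H H2 where
  /-- the Haar state `φ̂` of the compact dual `𝔾̂` -/
  phihat : B H →ₗ[ℂ] ℂ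
  phihat_state : IsStateOn H toLCQG.Mhat phihat
  phihat_normal : IsNormalFunctional H phihat
  /-- Kac type: the dual Haar state is a trace -/
  phihat_tracial : ∀ a ∈ toLCQG.Mhat, ∀ b ∈ toLCQG.Mhat, phihat (a * b) = phihat (b * a)
  /-- slices of `Δ̂(y)`, `y ∈ L∞(𝔾̂)`, lie in `L∞(𝔾̂)` -/
  slice_Deltahat_memL : ∀ ω, ∀ y ∈ toLCQG.Mhat, toLCQG.sliceL ω (toLCQG.Deltahat y) ∈ toLCQG.Mhat
  slice_Deltahat_memR : ∀ ω, ∀ y ∈ toLCQG.Mhat, toLCQG.sliceR ω (toLCQG.Deltahat y) ∈ toLCQG.Mhat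
  /-- left invariance of `φ̂`: `φ̂((ω ⊗ id)Δ̂(y)) = ω(1) φ̂(y)` -/
  phihat_left_inv : ∀ y ∈ toLCQG.Mhat, ∀ ω : B H →ₗ[ℂ] ℂ, IsNormalFunctional H ω →
    phihat (toLCQG.sliceL ω (toLCQG.Deltahat y)) = ω 1 * phihat y
  /-- right invariance of `φ̂`: `φ̂((id ⊗ ω)Δ̂(y)) = ω(1) φ̂(y)` -/
  phihat_right_inv : ∀ y ∈ toLCQG.Mhat, ∀ ω : B H →ₗ[ℂ] ℂ, IsNormalFunctional H ω →
    phihat (toLCQG.sliceR ω (toLCQG.Deltahat y)) = ω 1 * phihat y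
  /-- the GNS map `Λ_{φ̂} : L∞(𝔾̂) → L²(𝔾)` -/
  Lam : B H → H
  Lam_inner : ∀ a ∈ toLCQG.Mhat, ∀ b ∈ toLCQG.Mhat, ⟪Lam a, Lam b⟫ = phihat (star a * b)
  Lam_act : ∀ a ∈ toLCQG.Mhat, ∀ b ∈ toLCQG.Mhat, a (Lam b) = Lam (a * b)

set_option linter.unusedSectionVars false

/-- An (internal) Hilbert space tensor product. -/
structure HT (A B K : Type*) [NormedAddCommGroup A] [InnerProductSpace ℂ A]
    [NormedAddCommGroup B] [InnerProductSpace ℂ B]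
    [NormedAddCommGroup K] [InnerProductSpace ℂ K] where
  t : A →ₗ[ℂ] B →ₗ[ℂ] K
  inner_t : ∀ a b c d, ⟪t a b, t c d⟫ = ⟪a, c⟫ * ⟪b, d⟫
  total : (Submodule.span ℂ {v : K | ∃ a b, v = t a b}).topologicalClosure = ⊤

namespace HT

variable {A B K E : Type*} [NormedAddCommGroup A] [InnerProductSpace ℂ A] [CompleteSpace A]
  [NormedAddCommGroup B] [InnerProductSpace ℂ B] [CompleteSpace B]
  [NormedAddCommGroup K] [InnerProductSpace ℂ K] [CompleteSpace K]
  [NormedAddCommGroup E] [InnerProductSpace ℂ E] [CompleteSpace E]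
  (P : HT A B K)

/-- The swapped tensor product. -/
def swap : HT B A K where
  t := P.t.flip
  inner_t a b c d := by simp [P.inner_t, mul_comm]
  total := by
    rw [← P.total]
    congr 2
    ext v
    constructor
    · rintro ⟨a, b, h⟩; exact ⟨b, a, h⟩
    · rintro ⟨a, b, h⟩; exact ⟨b, a, h⟩

@[simp] lemma swap_t (a : A) (b : B) : P.swap.t b a = P.t a b := rfl

lemma norm_t (a : A) (b : B) : ‖P.t a b‖ = ‖a‖ * ‖b‖ := by
  have h := P.inner_t a b a b
  rw [inner_self_eq_norm_sq_to_K, inner_self_eq_norm_sq_to_K, inner_self_eq_norm_sq_to_K] at h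
  have h2 : ‖P.t a b‖ ^ 2 = (‖a‖ * ‖b‖) ^ 2 := by
    rw [mul_pow]; exact_mod_cast h
  exact (sq_eq_sq₀ (norm_nonneg _) (by positivity)).1 h2

/-- `b ↦ a ⊗ b`. -/
def ket (a : A) : B →L[ℂ] K :=
  (P.t a).mkContinuous ‖a‖ (fun b => (P.norm_t a b).le)

@[simp] lemma ket_apply (a : A) (b : B) : P.ket a b = P.t a b := rfl

lemma norm_ket_le (a : A) : ‖P.ket a‖ ≤ ‖a‖ :=
  LinearMap.mkContinuous_norm_le _ (norm_nonneg _) _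

/-- the adjoint of `ket`. -/
def bra (a : A) : K →L[ℂ] B := ContinuousLinearMap.adjoint (P.ket a)

lemma norm_bra_le (a : A) : ‖P.bra a‖ ≤ ‖a‖ := by
  unfold bra
  rw [LinearIsometryEquiv.norm_map]; exact P.norm_ket_le a

lemma inner_bra (a : A) (b : B) (v : K) : ⟪b, P.bra a v⟫ = ⟪P.t a b, v⟫ := by
  simp [bra, ContinuousLinearMap.adjoint_inner_right]

lemma bra_inner (a : A) (b : B) (v : K) : ⟪P.bra a v, b⟫ = ⟪v, P.t a b⟫ := by
  simp [bra, ContinuousLinearMap.adjoint_inner_left]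

lemma bra_t (a a' : A) (b : B) : P.bra a (P.t a' b) = ⟪a, a'⟫ • b := by
  refine ext_inner_left ℂ fun c => ?_
  rw [inner_bra, P.inner_t, inner_smul_right]

lemma ext_t {F : Type*} [NormedAddCommGroup F] [NormedSpace ℂ F] {X Y : K →L[ℂ] F}
    (h : ∀ a b, X (P.t a b) = Y (P.t a b)) : X = Y := by
  have hd : Dense ((Submodule.span ℂ {v : K | ∃ a b, v = P.t a b} : Submodule ℂ K) : Set K) := by
    exact Submodule.dense_iff_topologicalClosure_eq_top.2 P.total
  refine ContinuousLinearMap.ext_on hd ?_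
  rintro v ⟨a, b, rfl⟩
  exact h a b

lemma ext_v {v w : K} (h : ∀ a b, ⟪P.t a b, v⟫ = ⟪P.t a b, w⟫) : v = w := by
  have h2 : innerSL ℂ v = innerSL ℂ w := by
    refine P.ext_t fun a b => ?_
    simp only [innerSL_apply_apply]
    rw [← inner_conj_symm, h, inner_conj_symm]
  exact (innerSL_inj (𝕜 := ℂ)).1 h2

lemma ext_bra {v w : K} (h : ∀ a, P.bra a v = P.bra a w) : v = w :=
  P.ext_v fun a b => by rw [← inner_bra, h, inner_bra]

lemma ext_slice {X Y : K →L[ℂ] K} (h : ∀ a a' b, P.bra a (X (P.t a' b)) = P.bra a (Y (P.t a' b))) :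
    X = Y :=
  P.ext_t fun a' b => P.ext_bra fun a => h a a' b

lemma exists_lift (f : A →ₗ[ℂ] B →ₗ[ℂ] E) (c : ℝ) (hc : 0 ≤ c)
    (hf : ∀ a b a' b', ⟪f a b, f a' b'⟫ = (c : ℂ) * (⟪a, a'⟫ * ⟪b, b'⟫)) :
    ∃ F : K →L[ℂ] E, ∀ a b, F (P.t a b) = f a b := by
  set e : TensorProduct ℂ A B →ₗ[ℂ] K := TensorProduct.lift P.t with he
  set g : TensorProduct ℂ A B →ₗ[ℂ] E := TensorProduct.lift f with hg
  have key : ∀ x y, ⟪g x, g y⟫ = (c : ℂ) * ⟪e x, e y⟫ := by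
    intro x y
    induction x using TensorProduct.induction_on with
    | zero => simp
    | add x1 x2 h1 h2 => simp only [map_add, inner_add_left, h1, h2, mul_add]
    | tmul a b =>
      induction y using TensorProduct.induction_on with
      | zero => simp
      | add x1 x2 h1 h2 => simp only [map_add, inner_add_right, h1, h2, mul_add]
      | tmul a' b' => simp [he, hg, hf, P.inner_t]
  have hn : ∀ x, ‖g x‖ ≤ Real.sqrt c * ‖e x‖ := by
    intro x
    have h := key x x
    rw [inner_self_eq_norm_sq_to_K, inner_self_eq_norm_sq_to_K] at h
    have h2 : ‖g x‖ ^ 2 = (Real.sqrt c * ‖e x‖) ^ 2 := by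
      rw [mul_pow, Real.sq_sqrt hc]
      have h' : ((‖g x‖ ^ 2 : ℝ) : ℂ) = ((c * ‖e x‖ ^ 2 : ℝ) : ℂ) := by push_cast; exact h
      exact_mod_cast h'
    exact ((sq_eq_sq₀ (norm_nonneg _) (by positivity)).1 h2).le
  have hd : DenseRange e := by
    have : Dense ((Submodule.span ℂ {v : K | ∃ a b, v = P.t a b} : Submodule ℂ K) : Set K) :=
      Submodule.dense_iff_topologicalClosure_eq_top.2 P.total
    refine this.mono ?_
    have : Submodule.span ℂ {v : K | ∃ a b, v = P.t a b} ≤ LinearMap.range e := by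
      rw [Submodule.span_le]
      rintro v ⟨a, b, rfl⟩
      exact ⟨a ⊗ₜ[ℂ] b, by simp [he]⟩
    exact this
  refine ⟨g.extendOfNorm e, fun a b => ?_⟩
  have := LinearMap.extendOfNorm_eq hd ⟨_, hn⟩ (a ⊗ₜ[ℂ] b)
  simpa [he, hg] using this

lemma exists_amp (X : A →L[ℂ] A) : ∃ Y : K →L[ℂ] K, ∀ a b, Y (P.t a b) = P.t (X a) b := by
  have hX : X ∈ Submodule.span ℂ (unitary (A →L[ℂ] A) : Set (A →L[ℂ] A)) := by
    rw [CStarAlgebra.span_unitary]; trivial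
  induction hX using Submodule.span_induction with
  | mem u hu =>
    refine P.exists_lift (E := K) (P.t.comp u.toLinearMap) 1 zero_le_one ?_
    intro a b a' b'
    have h : ⟪u a, u a'⟫ = ⟪a, a'⟫ := by
      rw [← ContinuousLinearMap.adjoint_inner_right, ← ContinuousLinearMap.star_eq_adjoint,
        ← mul_apply_eq_comp, (Unitary.mem_iff.1 hu).1]; rfl
    simp [P.inner_t, h]
  | zero => exact ⟨0, by simp⟩
  | add x y _ _ hx hy =>
    obtain ⟨Y, hY⟩ := hx
    obtain ⟨Z, hZ⟩ := hy
    exact ⟨Y + Z, fun a b => by simp [hY, hZ]⟩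
  | smul c x _ hx =>
    obtain ⟨Y, hY⟩ := hx
    exact ⟨c • Y, fun a b => by simp [hY]⟩

/-- `X ⊗ 1`. -/
def amp (X : A →L[ℂ] A) : K →L[ℂ] K := (P.exists_amp X).choose

@[simp] lemma amp_t (X : A →L[ℂ] A) (a : A) (b : B) : P.amp X (P.t a b) = P.t (X a) b :=
  (P.exists_amp X).choose_spec a b

lemma amp_mul (X Y : A →L[ℂ] A) : P.amp (X * Y) = P.amp X * P.amp Y :=
  P.ext_t fun a b => by simp

lemma amp_one : P.amp 1 = 1 := P.ext_t fun a b => by simp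

lemma amp_star (X : A →L[ℂ] A) : P.amp (star X) = star (P.amp X) := by
  refine P.ext_t fun a b => P.ext_v fun c d => ?_
  rw [ContinuousLinearMap.star_eq_adjoint (P.amp X), ContinuousLinearMap.adjoint_inner_right,
    amp_t, amp_t, P.inner_t, P.inner_t, ContinuousLinearMap.star_eq_adjoint,
    ContinuousLinearMap.adjoint_inner_right]

/-- `1 ⊗ Y`. -/
def ampR (Y : B →L[ℂ] B) : K →L[ℂ] K := P.swap.amp Y

@[simp] lemma ampR_t (Y : B →L[ℂ] B) (a : A) (b : B) : P.ampR Y (P.t a b) = P.t a (Y b) :=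
  P.swap.amp_t Y b a

lemma ampR_mul (X Y : B →L[ℂ] B) : P.ampR (X * Y) = P.ampR X * P.ampR Y := P.swap.amp_mul X Y
lemma ampR_one : P.ampR 1 = 1 := P.swap.amp_one
lemma ampR_star (X : B →L[ℂ] B) : P.ampR (star X) = star (P.ampR X) := P.swap.amp_star X

lemma amp_comm_ampR (X : A →L[ℂ] A) (Y : B →L[ℂ] B) : Commute (P.amp X) (P.ampR Y) :=
  P.ext_t fun a b => by simp

lemma bra_ampR (a : A) (Y : B →L[ℂ] B) (v : K) : P.bra a (P.ampR Y v) = Y (P.bra a v) := by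
  refine ext_inner_left ℂ fun c => ?_
  rw [inner_bra, ← ContinuousLinearMap.adjoint_inner_left, ← ContinuousLinearMap.star_eq_adjoint,
    ← ampR_star, ampR_t, ← inner_bra, ContinuousLinearMap.star_eq_adjoint,
    ContinuousLinearMap.adjoint_inner_left]

/-- The matrix coefficient `(⟨a| ⊗ 1) X (|b⟩ ⊗ 1)`. -/
def sl (X : K →L[ℂ] K) (a a' : A) : B →L[ℂ] B := P.bra a ∘L X ∘L P.ket a'

lemma sl_apply (X : K →L[ℂ] K) (a a' : A) (b : B) : P.sl X a a' b = P.bra a (X (P.t a' b)) := rfl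

lemma inner_sl (X : K →L[ℂ] K) (a a' : A) (b b' : B) :
    ⟪b, P.sl X a a' b'⟫ = ⟪P.t a b, X (P.t a' b')⟫ := by rw [sl_apply, inner_bra]

lemma sl_star (X : K →L[ℂ] K) (a a' : A) : star (P.sl X a a') = P.sl (star X) a' a := by
  refine ContinuousLinearMap.ext fun b => ext_inner_left ℂ fun c => ?_
  rw [inner_sl, ContinuousLinearMap.star_eq_adjoint, ContinuousLinearMap.star_eq_adjoint,
    ContinuousLinearMap.adjoint_inner_right, ContinuousLinearMap.adjoint_inner_right,
    sl_apply, bra_inner]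

lemma sl_ext {X Y : K →L[ℂ] K} (h : ∀ a a', P.sl X a a' = P.sl Y a a') : X = Y :=
  P.ext_slice fun a a' b => by simpa [sl_apply] using congrArg (fun T => T b) (h a a')

lemma sl_ampR_mul (X : K →L[ℂ] K) (Y : B →L[ℂ] B) (a a' : A) :
    P.sl (P.ampR Y * X) a a' = Y * P.sl X a a' := by
  ext b; simp [sl_apply, bra_ampR]

lemma sl_mul_ampR (X : K →L[ℂ] K) (Y : B →L[ℂ] B) (a a' : A) :
    P.sl (X * P.ampR Y) a a' = P.sl X a a' * Y := by
  ext b; simp [sl_apply]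

lemma sl_commute {X : K →L[ℂ] K} {Y : B →L[ℂ] B} (h : Commute X (P.ampR Y)) (a a' : A) :
    Commute (P.sl X a a') Y := by
  rw [commute_iff_eq, ← sl_mul_ampR, ← sl_ampR_mul, h.eq]

lemma norm_sl_le (X : K →L[ℂ] K) (a a' : A) : ‖P.sl X a a'‖ ≤ ‖a‖ * ‖X‖ * ‖a'‖ := by
  unfold sl
  calc _ ≤ ‖P.bra a‖ * ‖X ∘L P.ket a'‖ := ContinuousLinearMap.opNorm_comp_le _ _
    _ ≤ ‖P.bra a‖ * (‖X‖ * ‖P.ket a'‖) := by gcongr; exact ContinuousLinearMap.opNorm_comp_le _ _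
    _ ≤ ‖a‖ * (‖X‖ * ‖a'‖) := by
      gcongr
      · exact P.norm_bra_le a
      · exact P.norm_ket_le a'
    _ = _ := by ring

lemma t_mem_closure {ι κ : Type*} (e : HilbertBasis ι ℂ A) (f : HilbertBasis κ ℂ B) (a : A)
    (b : B) : P.t a b ∈ (Submodule.span ℂ (Set.range fun p : ι × κ => P.t (e p.1) (f p.2))).topologicalClosure := by
  set S := (Submodule.span ℂ (Set.range fun p : ι × κ => P.t (e p.1) (f p.2))).topologicalClosure
  have hS : IsClosed (S : Set K) := Submodule.isClosed_topologicalClosure _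
  have h1 : ∀ i, ∀ b, P.t (e i) b ∈ S := by
    intro i b
    have hs := (f.hasSum_repr b).mapL (P.ket (e i))
    refine hS.mem_of_tendsto hs (Filter.Eventually.of_forall fun s => ?_)
    refine S.sum_mem fun j _ => ?_
    rw [map_smul]
    exact S.smul_mem _ (Submodule.le_topologicalClosure _ (Submodule.subset_span ⟨(i, j), rfl⟩))
  have hs := (e.hasSum_repr a).mapL (P.swap.ket b)
  refine hS.mem_of_tendsto hs (Filter.Eventually.of_forall fun s => ?_)
  refine S.sum_mem fun j _ => ?_
  rw [map_smul]
  exact S.smul_mem _ (h1 j b)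

/-- The product Hilbert basis. -/
def prodBasis {ι κ : Type*} (e : HilbertBasis ι ℂ A) (f : HilbertBasis κ ℂ B) :
    HilbertBasis (ι × κ) ℂ K :=
  HilbertBasis.mk (v := fun p : ι × κ => P.t (e p.1) (f p.2)) (by
    classical
    rw [orthonormal_iff_ite]
    rintro ⟨i, j⟩ ⟨i', j'⟩
    rw [P.inner_t, orthonormal_iff_ite.1 e.orthonormal, orthonormal_iff_ite.1 f.orthonormal]
    by_cases h1 : i = i' <;> by_cases h2 : j = j' <;> simp [h1, h2]) (by
    rw [← P.total]
    refine Submodule.topologicalClosure_minimal _ ?_ (Submodule.isClosed_topologicalClosure _)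
    rw [Submodule.span_le]
    rintro v ⟨a, b, rfl⟩
    exact P.t_mem_closure e f a b)

@[simp] lemma prodBasis_apply {ι κ : Type*} (e : HilbertBasis ι ℂ A) (f : HilbertBasis κ ℂ B)
    (p : ι × κ) : P.prodBasis e f p = P.t (e p.1) (f p.2) := by
  simp [prodBasis]

lemma parseval {ι : Type*} (e : HilbertBasis ι ℂ A) (v w : K) :
    HasSum (fun i => ⟪P.bra (e i) v, P.bra (e i) w⟫) ⟪v, w⟫ := by
  obtain ⟨κ, f, -⟩ := exists_hilbertBasis ℂ B
  have h := (P.prodBasis e f).hasSum_inner_mul_inner v w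
  refine h.prod_fiberwise fun i => ?_
  have h2 := f.hasSum_inner_mul_inner (P.bra (e i) v) (P.bra (e i) w)
  simpa only [prodBasis_apply, bra_inner, inner_bra] using h2

lemma parseval_norm {ι : Type*} (e : HilbertBasis ι ℂ A) (v : K) :
    HasSum (fun i => ‖P.bra (e i) v‖ ^ 2) (‖v‖ ^ 2) := by
  have h := P.parseval e v v
  simp only [inner_self_eq_norm_sq_to_K] at h
  exact_mod_cast h

end HT

section Triple

variable {A B : Type*} [NormedAddCommGroup A] [InnerProductSpace ℂ A] [CompleteSpace A]
  [NormedAddCommGroup B] [InnerProductSpace ℂ B] [CompleteSpace B]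
  {h h2 K : Type*} [NormedAddCommGroup h] [InnerProductSpace ℂ h] [CompleteSpace h]
  [NormedAddCommGroup h2] [InnerProductSpace ℂ h2] [CompleteSpace h2]
  [NormedAddCommGroup K] [InnerProductSpace ℂ K] [CompleteSpace K]

/-- The completed tensor product. -/
def HT.ofCompletion (A B : Type*) [NormedAddCommGroup A] [InnerProductSpace ℂ A]
    [NormedAddCommGroup B] [InnerProductSpace ℂ B] :
    HT A B (UniformSpace.Completion (TensorProduct ℂ A B)) where
  t := (TensorProduct.mk ℂ A B).compr₂ (UniformSpace.Completion.toComplₗᵢ (𝕜 := ℂ)).toLinearMap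
  inner_t a b c d := by simp
  total := by
    rw [← Submodule.dense_iff_topologicalClosure_eq_top]
    have hd : DenseRange (fun x : TensorProduct ℂ A B => (x : UniformSpace.Completion (TensorProduct ℂ A B))) :=
      UniformSpace.Completion.denseRange_coe
    refine hd.mono ?_
    rintro _ ⟨x, rfl⟩
    induction x using TensorProduct.induction_on with
    | zero =>
      simp only [UniformSpace.Completion.coe_zero]
      exact Submodule.zero_mem _
    | add x y hx hy =>
      simp only [UniformSpace.Completion.coe_add]
      exact Submodule.add_mem _ hx hy
    | tmul a b => exact Submodule.subset_span ⟨a, b, by simp⟩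

/-- A triple tensor product, over a given square. -/
structure Tri (P : HT h h h2) (K : Type*) [NormedAddCommGroup K] [InnerProductSpace ℂ K] where
  p1 : HT h h2 K
  p2 : HT h2 h K
  compat : ∀ a b c, p1.t a (P.t b c) = p2.t (P.t a b) c

lemma exists_tri_aux (P : HT h h h2) (p1 : HT h h2 K) (c : h) :
    ∃ F : h2 →L[ℂ] K, ∀ a b, F (P.t a b) = p1.t a (P.t b c) := by
  refine P.exists_lift (E := K) (p1.t.compl₂ (P.t.flip c)) (‖c‖ ^ 2) (by positivity) ?_
  intro a b a' b'
  have : ⟪c, c⟫ = ((‖c‖ ^ 2 : ℝ) : ℂ) := by rw [inner_self_eq_norm_sq_to_K]; norm_cast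
  simp only [LinearMap.compl₂_apply, LinearMap.flip_apply, p1.inner_t, P.inner_t, this]
  ring

lemma exists_tri (P : HT h h h2) (p1 : HT h h2 K) : Nonempty (Tri P K) := by
  choose F hF using exists_tri_aux P p1
  let tt : h2 →ₗ[ℂ] h →ₗ[ℂ] K := LinearMap.flip
    { toFun := fun c => (F c).toLinearMap
      map_add' := fun c d => by
        have : F (c + d) = F c + F d := P.ext_t fun a b => by simp [hF]
        rw [this]; rfl
      map_smul' := fun r c => by
        have : F (r • c) = r • F c := P.ext_t fun a b => by simp [hF]
        rw [this]; rfl }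
  have htt : ∀ v c, tt v c = F c v := fun v c => rfl
  refine ⟨⟨p1, ⟨tt, ?_, ?_⟩, ?_⟩⟩
  · intro v c w d
    have : ContinuousLinearMap.adjoint (F c) ∘L F d = ⟪c, d⟫ • (1 : h2 →L[ℂ] h2) := by
      refine P.ext_t fun a b => P.ext_v fun a' b' => ?_
      simp only [ContinuousLinearMap.comp_apply, ContinuousLinearMap.adjoint_inner_right, hF,
        p1.inner_t, P.inner_t, ContinuousLinearMap.smul_apply, inner_smul_right,
        one_apply_eq_self]
      ring
    rw [htt, htt, ← ContinuousLinearMap.adjoint_inner_right, ← ContinuousLinearMap.comp_apply, this]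
    simp [inner_smul_right, mul_comm]
  · set S := (Submodule.span ℂ {v : K | ∃ a b, v = tt a b}).topologicalClosure
    have hS : IsClosed (S : Set K) := Submodule.isClosed_topologicalClosure _
    rw [eq_top_iff, ← p1.total]
    refine Submodule.topologicalClosure_minimal _ ?_ hS
    rw [Submodule.span_le]
    rintro _ ⟨a, v, rfl⟩
    have : (⊤ : Submodule ℂ h2) ≤ S.comap (p1.ket a).toLinearMap := by
      rw [← P.total]
      refine Submodule.topologicalClosure_minimal _ ?_ (hS.preimage (p1.ket a).continuous)
      rw [Submodule.span_le]
      rintro _ ⟨b, c, rfl⟩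
      refine Submodule.le_topologicalClosure _ (Submodule.subset_span ⟨P.t a b, c, ?_⟩)
      rw [htt, hF]; rfl
    exact this (Submodule.mem_top (x := v))
  · intro a b c
    change _ = tt _ _
    rw [htt, hF]

variable {P : HT h h h2} (R : Tri P K)

namespace Tri

lemma sl3 (Z : h2 →L[ℂ] h2) (c c' : h) :
    R.p2.swap.sl (R.p1.ampR Z) c c' = P.ampR (P.swap.sl Z c c') := by
  refine P.ext_t fun a b => P.ext_v fun a1 b1 => ?_
  rw [HT.inner_sl, HT.swap_t, HT.swap_t, ← R.compat, ← R.compat, HT.ampR_t, HT.inner_t,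
    HT.ampR_t, HT.inner_t, HT.inner_sl]
  rfl

lemma sl1 (X : h2 →L[ℂ] h2) (a a' : h) :
    R.p1.sl (R.p2.amp X) a a' = P.amp (P.sl X a a') := by
  refine P.ext_t fun a b => P.ext_v fun a1 b1 => ?_
  rw [HT.inner_sl, R.compat, R.compat, HT.amp_t, HT.inner_t,
    HT.amp_t, HT.inner_t, HT.inner_sl]

lemma leg1 (x : h →L[ℂ] h) : R.p2.amp (P.amp x) = R.p1.amp x := by
  refine R.p1.ext_t fun a v => ?_
  have : R.p2.amp (P.amp x) ∘L R.p1.ket a = R.p1.amp x ∘L R.p1.ket a :=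
    P.ext_t fun b c => by
      change R.p2.amp (P.amp x) (R.p1.t a (P.t b c)) = R.p1.amp x (R.p1.t a (P.t b c))
      rw [R.p1.amp_t, R.compat, R.compat, R.p2.amp_t, P.amp_t]
  exact congrArg (fun T => T v) this

lemma leg2 (x : h →L[ℂ] h) : R.p2.amp (P.ampR x) = R.p1.ampR (P.amp x) := by
  refine R.p1.ext_t fun a v => ?_
  have : R.p2.amp (P.ampR x) ∘L R.p1.ket a = R.p1.ampR (P.amp x) ∘L R.p1.ket a :=
    P.ext_t fun b c => by
      change R.p2.amp (P.ampR x) (R.p1.t a (P.t b c)) = R.p1.ampR (P.amp x) (R.p1.t a (P.t b c))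
      rw [R.p1.ampR_t, P.amp_t, R.compat, R.compat, R.p2.amp_t, P.ampR_t]
  exact congrArg (fun T => T v) this

lemma leg3 (x : h →L[ℂ] h) : R.p2.ampR x = R.p1.ampR (P.ampR x) := by
  refine R.p1.ext_t fun a v => ?_
  have : R.p2.ampR x ∘L R.p1.ket a = R.p1.ampR (P.ampR x) ∘L R.p1.ket a :=
    P.ext_t fun b c => by
      change R.p2.ampR x (R.p1.t a (P.t b c)) = R.p1.ampR (P.ampR x) (R.p1.t a (P.t b c))
      rw [R.p1.ampR_t, P.ampR_t, R.compat, R.compat, R.p2.ampR_t]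
  exact congrArg (fun T => T v) this

lemma comm_12_23 (N : VonNeumannAlgebra h) {X Z : h2 →L[ℂ] h2}
    (hX : ∀ b ∈ N.commutant, Commute X (P.ampR b)) (hZ : ∀ y ∈ N, Commute Z (P.amp y)) :
    Commute (R.p2.amp X) (R.p1.ampR Z) := by
  refine R.p2.swap.sl_ext fun c c' => ?_
  have e1 : R.p2.amp X = R.p2.swap.ampR X := rfl
  rw [e1, HT.sl_ampR_mul, HT.sl_mul_ampR, sl3]
  refine hX _ ?_
  rw [VonNeumannAlgebra.mem_commutant_iff]
  intro y hy
  exact (P.swap.sl_commute (hZ y hy) c c').symm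

end Tri

end Triple

section Normal

variable {K : Type*} [NormedAddCommGroup K] [InnerProductSpace ℂ K] [CompleteSpace K]

lemma isNormal_vec (ξ η : K) : IsNormalFunctional K (vecFunctional K ξ η) := by
  refine ⟨fun n => if n = 0 then ξ else 0, fun n => if n = 0 then η else 0, ?_, ?_, ?_⟩
  · refine summable_of_ne_finset_zero (s := {0}) ?_
    intro n hn; simp at hn; simp [hn]
  · refine summable_of_ne_finset_zero (s := {0}) ?_
    intro n hn; simp at hn; simp [hn]
  · intro x
    have := hasSum_single (f := fun n : ℕ => ⟪(if n = 0 then η else 0), x (if n = 0 then ξ else 0)⟫) 0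
      (by intro n hn; simp [hn])
    simpa [vecFunctional] using this

lemma normal_bound {f : B K →ₗ[ℂ] ℂ} (hf : IsNormalFunctional K f) :
    ∃ C, ∀ X, ‖f X‖ ≤ C * ‖X‖ := by
  obtain ⟨ξ, η, h1, h2, h3⟩ := hf
  refine ⟨∑' n, (‖ξ n‖ ^ 2 + ‖η n‖ ^ 2), fun X => ?_⟩
  rw [← (h3 X).tsum_eq, ← tsum_mul_right]
  refine tsum_of_norm_bounded ((h1.add h2).mul_right ‖X‖).hasSum fun n => ?_
  calc ‖⟪η n, X (ξ n)⟫‖ ≤ ‖η n‖ * ‖X (ξ n)‖ := norm_inner_le_norm _ _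
    _ ≤ ‖η n‖ * (‖X‖ * ‖ξ n‖) := by gcongr; exact X.le_opNorm _
    _ = (‖η n‖ * ‖ξ n‖) * ‖X‖ := by ring
    _ ≤ _ := by gcongr; nlinarith [sq_nonneg (‖ξ n‖ - ‖η n‖), sq_nonneg (‖ξ n‖), sq_nonneg (‖η n‖)]

lemma basis_norm {ι : Type*} (e : HilbertBasis ι ℂ K) (v : K) :
    HasSum (fun p => ‖⟪e p, v⟫‖ ^ 2) (‖v‖ ^ 2) := by
  have h := e.hasSum_inner_mul_inner v v
  have h0 : ⟪v, v⟫ = ((‖v‖ ^ 2 : ℝ) : ℂ) := by rw [inner_self_eq_norm_sq_to_K]; norm_cast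
  rw [h0] at h
  have h2 : ∀ i, ⟪v, e i⟫ * ⟪e i, v⟫ = ((‖⟪e i, v⟫‖ ^ 2 : ℝ) : ℂ) := by
    intro i
    rw [← inner_conj_symm v, Complex.conj_mul']
    norm_cast
  simp only [h2] at h
  exact_mod_cast h

lemma normal_hasSum {ι : Type*} (e : HilbertBasis ι ℂ K) {f : B K →ₗ[ℂ] ℂ}
    (hf : IsNormalFunctional K f) (X : B K) :
    HasSum (fun p => f (InnerProductSpace.rankOne ℂ (e p) (star X (e p)))) (f X) := by
  obtain ⟨ξ, η, h1, h2, h3⟩ := hf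
  have hterm : ∀ n p, ⟪η n, e p⟫ * ⟪e p, X (ξ n)⟫
      = ⟪η n, InnerProductSpace.rankOne ℂ (e p) (star X (e p)) (ξ n)⟫ := by
    intro n p
    rw [InnerProductSpace.rankOne_apply, inner_smul_right, ContinuousLinearMap.star_eq_adjoint,
      ContinuousLinearMap.adjoint_inner_left, mul_comm]
  set F : ℕ × ι → ℂ := fun q => ⟪η q.1, e q.2⟫ * ⟪e q.2, X (ξ q.1)⟫ with hF
  have hXs : Summable fun n => ‖X (ξ n)‖ ^ 2 := by
    refine Summable.of_nonneg_of_le (fun n => by positivity) (fun n => ?_) (h1.mul_left (‖X‖ ^ 2))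
    rw [← mul_pow]; gcongr; exact X.le_opNorm _
  have hG : Summable fun q : ℕ × ι => ‖⟪e q.2, η q.1⟫‖ ^ 2 + ‖⟪e q.2, X (ξ q.1)⟫‖ ^ 2 := by
    rw [summable_prod_of_nonneg (fun q => by positivity)]
    refine ⟨fun n => ((basis_norm e (η n)).add (basis_norm e (X (ξ n)))).summable, ?_⟩
    refine (h2.add hXs).congr fun n => ?_
    exact (((basis_norm e (η n)).add (basis_norm e (X (ξ n)))).tsum_eq).symm
  have hFs : Summable F := by
    refine Summable.of_norm_bounded hG fun q => ?_
    rw [hF]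
    simp only [norm_mul]
    rw [norm_inner_symm (η q.1)]
    nlinarith [sq_nonneg (‖⟪e q.2, η q.1⟫‖ - ‖⟪e q.2, X (ξ q.1)⟫‖),
      sq_nonneg (‖⟪e q.2, η q.1⟫‖), sq_nonneg ‖⟪e q.2, X (ξ q.1)⟫‖]
  have s1 : HasSum (fun n => ⟪η n, X (ξ n)⟫) (∑' q, F q) :=
    hFs.hasSum.prod_fiberwise fun n => e.hasSum_inner_mul_inner (η n) (X (ξ n))
  have e1 : ∑' q, F q = f X := s1.unique (h3 X)
  have hsw : HasSum (fun q : ι × ℕ => F q.swap) (f X) := by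
    rw [← e1]
    exact (Equiv.prodComm ι ℕ).hasSum_iff.2 hFs.hasSum
  refine hsw.prod_fiberwise fun p => ?_
  have := h3 (InnerProductSpace.rankOne ℂ (e p) (star X (e p)))
  refine this.congr_fun ?_ |> id
  intro n
  exact hterm n p

end Normal

section Slices

variable {h h2 : Type*} [NormedAddCommGroup h] [InnerProductSpace ℂ h] [CompleteSpace h]
  [NormedAddCommGroup h2] [InnerProductSpace ℂ h2] [CompleteSpace h2]

lemma rankOne_t (P : HT h h h2) (a b c d : h) :
    InnerProductSpace.rankOne ℂ (P.t a b) (P.t c d)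
      = P.amp (InnerProductSpace.rankOne ℂ a c) * P.ampR (InnerProductSpace.rankOne ℂ b d) := by
  refine P.ext_t fun a' b' => ?_
  change _ = P.amp _ (P.ampR _ _)
  rw [P.ampR_t, P.amp_t]
  simp only [InnerProductSpace.rankOne_apply, P.inner_t, map_smul, LinearMap.smul_apply,
    smul_smul]
  rw [mul_comm]

lemma normal_ext (P : HT h h h2) {f g : B h2 →ₗ[ℂ] ℂ} (hf : IsNormalFunctional h2 f)
    (hg : IsNormalFunctional h2 g)
    (hfg : ∀ x y : B h, f (P.amp x * P.ampR y) = g (P.amp x * P.ampR y)) : f = g := by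
  obtain ⟨Cf, hCf⟩ := normal_bound hf
  obtain ⟨Cg, hCg⟩ := normal_bound hg
  let f' : B h2 →L[ℂ] ℂ := f.mkContinuous Cf hCf
  let g' : B h2 →L[ℂ] ℂ := g.mkContinuous Cg hCg
  have key : ∀ a b w, f (InnerProductSpace.rankOne ℂ (P.t a b) w)
      = g (InnerProductSpace.rankOne ℂ (P.t a b) w) := by
    intro a b w
    let φ : h2 →L⋆[ℂ] ℂ := (f' - g').comp (InnerProductSpace.rankOne ℂ (P.t a b))
    have hφ : ∀ w, φ w = f (InnerProductSpace.rankOne ℂ (P.t a b) w)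
      - g (InnerProductSpace.rankOne ℂ (P.t a b) w) := fun w => rfl
    have : (⊤ : Submodule ℂ h2) ≤ LinearMap.ker φ.toLinearMap := by
      rw [← P.total]
      refine Submodule.topologicalClosure_minimal _ ?_ φ.isClosed_ker
      rw [Submodule.span_le]
      rintro _ ⟨c, d, rfl⟩
      change φ _ = 0
      rw [hφ, rankOne_t, hfg, sub_self]
    have h1 : φ w = 0 := this (Submodule.mem_top (x := w))
    rw [hφ] at h1
    exact sub_eq_zero.1 h1
  obtain ⟨w, e, -⟩ := exists_hilbertBasis ℂ h
  ext X
  have h1 := normal_hasSum (P.prodBasis e e) hf X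
  have h2 := normal_hasSum (P.prodBasis e e) hg X
  simp only [P.prodBasis_apply, key] at h1 h2
  exact h1.unique h2

lemma summable_pair {ξ η : ℕ → h} (h1 : Summable fun n => ‖ξ n‖ ^ 2)
    (h2 : Summable fun n => ‖η n‖ ^ 2) : Summable fun n => ‖η n‖ * ‖ξ n‖ := by
  refine Summable.of_nonneg_of_le (fun n => by positivity) (fun n => ?_) (h1.add h2)
  nlinarith [sq_nonneg (‖ξ n‖ - ‖η n‖), sq_nonneg (‖ξ n‖), sq_nonneg (‖η n‖)]

lemma exists_normal {ξ η : ℕ → h} (h1 : Summable fun n => ‖ξ n‖ ^ 2)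
    (h2 : Summable fun n => ‖η n‖ ^ 2) :
    ∃ f : B h →ₗ[ℂ] ℂ, ∀ X : B h, HasSum (fun n => ⟪η n, X (ξ n)⟫) (f X) := by
  have hs : ∀ X : B h, Summable (fun n => ⟪η n, X (ξ n)⟫) := by
    intro X
    refine Summable.of_norm_bounded ((summable_pair h1 h2).mul_right ‖X‖) fun n => ?_
    calc ‖⟪η n, X (ξ n)⟫‖ ≤ ‖η n‖ * ‖X (ξ n)‖ := norm_inner_le_norm _ _
      _ ≤ ‖η n‖ * (‖X‖ * ‖ξ n‖) := by gcongr; exact X.le_opNorm _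
      _ = (‖η n‖ * ‖ξ n‖) * ‖X‖ := by ring
  refine ⟨⟨⟨fun X => ∑' n, ⟪η n, X (ξ n)⟫, ?_⟩, ?_⟩, fun X => (hs X).hasSum⟩
  · intro X Y
    rw [← (hs X).tsum_add (hs Y)]
    simp [inner_add_right]
  · intro c X
    simp only [RingHom.id_apply, smul_eq_mul]
    rw [← tsum_mul_left]
    simp [inner_smul_right]

end Slices

section Square

variable {H H2 : Type*}
  [NormedAddCommGroup H] [InnerProductSpace ℂ H] [CompleteSpace H]
  [NormedAddCommGroup H2] [InnerProductSpace ℂ H2] [CompleteSpace H2]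

/-- The tensor square underlying a quantum group. -/
def LCQG.sq (Q : LCQG H H2) : HT H H H2 := ⟨Q.tmul, Q.tmul_inner, Q.tmul_total⟩

variable (Q : LCQG H H2)

lemma LCQG.sq_t (a b : H) : Q.sq.t a b = Q.tmul a b := rfl

lemma LCQG.tensorOp_eq (x y : B H) : Q.tensorOp x y = Q.sq.amp x * Q.sq.ampR y := by
  refine Q.sq.ext_t fun a b => ?_
  change _ = Q.sq.amp _ (Q.sq.ampR _ _)
  rw [Q.sq.ampR_t, Q.sq.amp_t]
  exact Q.tensorOp_apply _ _ _ _

lemma LCQG.tensorOp_l (x : B H) : Q.tensorOp x 1 = Q.sq.amp x := by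
  rw [tensorOp_eq, HT.ampR_one, mul_one]

lemma LCQG.tensorOp_r (x : B H) : Q.tensorOp 1 x = Q.sq.ampR x := by
  rw [tensorOp_eq, HT.amp_one, one_mul]

lemma LCQG.funcTensor_vec (ξ η ξ' η' : H) :
    Q.funcTensor (vecFunctional H ξ η) (vecFunctional H ξ' η')
      = vecFunctional H2 (Q.tmul ξ ξ') (Q.tmul η η') := by
  refine normal_ext Q.sq (Q.funcTensor_normal _ _ (isNormal_vec _ _) (isNormal_vec _ _))
    (isNormal_vec _ _) fun x y => ?_
  rw [← Q.tensorOp_eq, Q.funcTensor_elem]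
  change ⟪η, x ξ⟫ * ⟪η', y ξ'⟫ = ⟪Q.tmul η η', Q.tensorOp x y (Q.tmul ξ ξ')⟫
  rw [Q.tensorOp_apply, Q.tmul_inner]

lemma LCQG.sliceL_vec (ξ η : H) (X : B H2) :
    Q.sliceL (vecFunctional H ξ η) X = Q.sq.sl X η ξ := by
  ext1 b
  refine ext_inner_left ℂ fun a => ?_
  have := Q.sliceL_char (vecFunctional H ξ η) X b a
  rw [Q.funcTensor_vec] at this
  rw [Q.sq.inner_sl]
  exact this

lemma LCQG.sliceR_vec (ξ η : H) (X : B H2) :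
    Q.sliceR (vecFunctional H ξ η) X = Q.sq.swap.sl X η ξ := by
  ext1 b
  refine ext_inner_left ℂ fun a => ?_
  have := Q.sliceR_char (vecFunctional H ξ η) X b a
  rw [Q.funcTensor_vec] at this
  rw [Q.sq.swap.inner_sl]
  exact this

lemma LCQG.sliceL_hasSum {ω : B H →ₗ[ℂ] ℂ} {ξ η : ℕ → H} (h1 : Summable fun n => ‖ξ n‖ ^ 2)
    (h2 : Summable fun n => ‖η n‖ ^ 2) (h3 : ∀ x : B H, HasSum (fun n => ⟪η n, x (ξ n)⟫) (ω x))
    (X : B H2) : HasSum (fun n => Q.sq.sl X (η n) (ξ n)) (Q.sliceL ω X) := by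
  have hs : Summable (fun n => Q.sq.sl X (η n) (ξ n)) := by
    refine Summable.of_norm_bounded ((summable_pair h1 h2).mul_right ‖X‖) fun n => ?_
    refine (Q.sq.norm_sl_le _ _ _).trans (le_of_eq ?_)
    ring
  have : Q.sliceL ω X = ∑' n, Q.sq.sl X (η n) (ξ n) := by
    ext1 b
    refine ext_inner_left ℂ fun a => ?_
    have hc := Q.sliceL_char ω X b a
    have g1 : Summable fun n => ‖Q.tmul (ξ n) b‖ ^ 2 := by
      refine (h1.mul_right (‖b‖ ^ 2)).congr fun n => ?_
      rw [← Q.sq_t, Q.sq.norm_t, mul_pow]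
    have g2 : Summable fun n => ‖Q.tmul (η n) a‖ ^ 2 := by
      refine (h2.mul_right (‖a‖ ^ 2)).congr fun n => ?_
      rw [← Q.sq_t, Q.sq.norm_t, mul_pow]
    obtain ⟨f, hf⟩ := exists_normal g1 g2
    have hff : Q.funcTensor ω (vecFunctional H b a) = f := by
      refine normal_ext Q.sq (Q.funcTensor_normal _ _ ⟨ξ, η, h1, h2, h3⟩ (isNormal_vec _ _))
        ⟨_, _, g1, g2, hf⟩ fun x y => ?_
      rw [← Q.tensorOp_eq, Q.funcTensor_elem]
      refine HasSum.unique ?_ (hf _)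
      simp only [Q.tensorOp_apply, Q.tmul_inner]
      exact (h3 x).mul_right _
    rw [hff] at hc
    change ⟪a, Q.sliceL ω X b⟫ = _ at hc
    rw [hc]
    refine (hf X).unique ?_
    have hl := hs.hasSum.mapL ((innerSL ℂ a).comp (ContinuousLinearMap.apply ℂ H b))
    refine hl.congr_fun ?_ |> id
    intro n
    exact (Q.sq.inner_sl X (η n) (ξ n) a b).symm
  rw [this]
  exact hs.hasSum

end Square

section Scalars

variable {H H2 : Type*}
  [NormedAddCommGroup H] [InnerProductSpace ℂ H] [CompleteSpace H]
  [NormedAddCommGroup H2] [InnerProductSpace ℂ H2] [CompleteSpace H2]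

lemma inner_self_C (v : H) : ⟪v, v⟫ = ((‖v‖ ^ 2 : ℝ) : ℂ) := by
  rw [inner_self_eq_norm_sq_to_K]; norm_cast

lemma HT.commute_of_sl (P : HT H H H2) {X : B H2} {y : B H}
    (hc : ∀ a a', Commute (P.sl X a a') y) : Commute X (P.ampR y) := by
  refine P.sl_ext fun a a' => ?_
  rw [P.sl_ampR_mul, P.sl_mul_ampR]
  exact hc a a'

lemma HT.sl_amp (P : HT H H H2) (y : B H) (a a' : H) : P.sl (P.amp y) a a' = ⟪a, y a'⟫ • (1 : B H) := by
  ext1 b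
  rw [P.sl_apply, P.amp_t, P.bra_t]
  rfl

lemma HT.sl_ampR (P : HT H H H2) (y : B H) (a a' : H) : P.sl (P.ampR y) a a' = ⟪a, a'⟫ • y := by
  ext1 b
  rw [P.sl_apply, P.ampR_t, P.bra_t]
  rfl

section
variable (Q : LCQG H H2)

lemma LCQG.flip_mul_flip : Q.flipU * Q.flipU = 1 := by
  refine Q.sq.ext_t fun a b => ?_
  change Q.flipU (Q.flipU (Q.tmul a b)) = Q.tmul a b
  rw [Q.flipU_apply, Q.flipU_apply]

lemma LCQG.star_flip : star Q.flipU = Q.flipU := by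
  refine Q.sq.ext_t fun a b => Q.sq.ext_v fun c d => ?_
  rw [ContinuousLinearMap.star_eq_adjoint, ContinuousLinearMap.adjoint_inner_right]
  change ⟪Q.flipU (Q.tmul c d), Q.tmul a b⟫ = ⟪Q.tmul c d, Q.flipU (Q.tmul a b)⟫
  rw [Q.flipU_apply, Q.flipU_apply, Q.tmul_inner, Q.tmul_inner, mul_comm]

lemma LCQG.flip_ampR (x : B H) : Q.flipU * Q.sq.ampR x = Q.sq.amp x * Q.flipU := by
  refine Q.sq.ext_t fun a b => ?_
  change Q.flipU (Q.sq.ampR x (Q.sq.t a b)) = Q.sq.amp x (Q.flipU (Q.tmul a b))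
  rw [Q.flipU_apply, Q.sq.ampR_t, Q.sq_t, Q.flipU_apply, ← Q.sq_t, ← Q.sq_t, Q.sq.amp_t]

lemma LCQG.flip_amp (x : B H) : Q.flipU * Q.sq.amp x = Q.sq.ampR x * Q.flipU := by
  refine Q.sq.ext_t fun a b => ?_
  change Q.flipU (Q.sq.amp x (Q.sq.t a b)) = Q.sq.ampR x (Q.flipU (Q.tmul a b))
  rw [Q.flipU_apply, Q.sq.amp_t, Q.sq_t, Q.flipU_apply, ← Q.sq_t, ← Q.sq_t, Q.sq.ampR_t]

lemma LCQG.sl_flip (X : B H2) (a a' : H) :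
    Q.sq.sl (Q.flipU * X * Q.flipU) a a' = Q.sq.swap.sl X a a' := by
  ext1 b
  refine ext_inner_left ℂ fun c => ?_
  rw [HT.inner_sl, HT.inner_sl, HT.swap_t, HT.swap_t, Q.sq_t, Q.sq_t, Q.sq_t, Q.sq_t]
  change ⟪_, Q.flipU (X (Q.flipU _))⟫ = _
  rw [Q.flipU_apply, ← Q.flipU_apply c a]
  nth_rewrite 2 [← Q.star_flip]
  rw [ContinuousLinearMap.star_eq_adjoint, ContinuousLinearMap.adjoint_inner_right,
    Q.flipU_apply, Q.flipU_apply]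

lemma LCQG.swap_sl_flip (X : B H2) (a a' : H) :
    Q.sq.swap.sl (Q.flipU * X * Q.flipU) a a' = Q.sq.sl X a a' := by
  rw [← Q.sl_flip]
  have : Q.flipU * (Q.flipU * X * Q.flipU) * Q.flipU = (Q.flipU * Q.flipU) * X * (Q.flipU * Q.flipU) := by
    noncomm_ring
  rw [this, Q.flip_mul_flip, one_mul, mul_one]

/-- `W (y ⊗ 1) W*`. -/
def LCQG.Phi (y : B H) : B H2 := Q.W * Q.sq.amp y * star Q.W

lemma LCQG.Deltahat_eq (y : B H) : Q.Deltahat y = Q.flipU * Q.Phi y * Q.flipU := by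
  unfold Deltahat What Phi
  rw [star_mul, star_mul, star_star, Q.star_flip, Q.tensorOp_r]
  have : Q.flipU * (Q.W * Q.flipU) * Q.sq.ampR y * (Q.flipU * star Q.W * Q.flipU)
    = Q.flipU * Q.W * (Q.flipU * Q.sq.ampR y) * Q.flipU * star Q.W * Q.flipU := by noncomm_ring
  rw [this, Q.flip_ampR]
  have : Q.flipU * Q.W * (Q.sq.amp y * Q.flipU) * Q.flipU * star Q.W * Q.flipU
    = Q.flipU * Q.W * Q.sq.amp y * (Q.flipU * Q.flipU) * star Q.W * Q.flipU := by noncomm_ring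
  rw [this, Q.flip_mul_flip]
  noncomm_ring

lemma LCQG.W_comm_l {b : B H} (hb : b ∈ Q.M.commutant) : Commute Q.W (Q.sq.amp b) := by
  rw [← Q.tensorOp_l]; exact Q.W_mem b hb 1 (one_mem _)

lemma LCQG.W_comm_r {b : B H} (hb : b ∈ Q.Mhat.commutant) : Commute Q.W (Q.sq.ampR b) := by
  rw [← Q.tensorOp_r]; exact Q.W_mem 1 (one_mem _) b hb

lemma LCQG.V_comm_l {b : B H} (hb : b ∈ Q.Mhat) : Commute Q.V (Q.sq.amp b) := by
  rw [← Q.tensorOp_l]; exact Q.V_mem b hb 1 (one_mem _)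

lemma mem_of_comm_commutant (N : VonNeumannAlgebra H) {x : B H}
    (hx : ∀ b ∈ N.commutant, Commute x b) : x ∈ N := by
  rw [← N.commutant_commutant, VonNeumannAlgebra.mem_commutant_iff]
  intro g hg
  exact (hx g hg).symm

lemma mem_commutant_of_comm (N : VonNeumannAlgebra H) {x : B H}
    (hx : ∀ b ∈ N, Commute x b) : x ∈ N.commutant := by
  rw [VonNeumannAlgebra.mem_commutant_iff]
  intro g hg
  exact (hx g hg).symm

lemma comm_of_mem_commutant (N : VonNeumannAlgebra H) {x b : B H} (hx : x ∈ N)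
    (hb : b ∈ N.commutant) : Commute x b := by
  rw [VonNeumannAlgebra.mem_commutant_iff] at hb
  exact hb x hx

end

variable (Q : DiscreteKacQG H H2)

lemma DiscreteKacQG.slA_mem {y : B H} (hy : y ∈ Q.Mhat) (a a' : H) :
    Q.sq.sl (Q.Phi y) a a' ∈ Q.Mhat := by
  have := Q.slice_Deltahat_memR (vecFunctional H a' a) y hy
  rwa [Q.Deltahat_eq, Q.sliceR_vec, Q.swap_sl_flip] at this

lemma DiscreteKacQG.slB_mem {y : B H} (hy : y ∈ Q.Mhat) (a a' : H) :
    Q.sq.swap.sl (Q.Phi y) a a' ∈ Q.Mhat := by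
  have := Q.slice_Deltahat_memL (vecFunctional H a' a) y hy
  rwa [Q.Deltahat_eq, Q.sliceL_vec, Q.sl_flip] at this

lemma DiscreteKacQG.slA_inv {y : B H} (hy : y ∈ Q.Mhat) (a a' : H) :
    Q.phihat (Q.sq.sl (Q.Phi y) a a') = ⟪a, a'⟫ * Q.phihat y := by
  have := Q.phihat_right_inv y hy (vecFunctional H a' a) (isNormal_vec _ _)
  rwa [Q.Deltahat_eq, Q.sliceR_vec, Q.swap_sl_flip] at this

lemma DiscreteKacQG.slB_inv {y : B H} (hy : y ∈ Q.Mhat) (a a' : H) :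
    Q.phihat (Q.sq.swap.sl (Q.Phi y) a a') = ⟪a, a'⟫ * Q.phihat y := by
  have := Q.phihat_left_inv y hy (vecFunctional H a' a) (isNormal_vec _ _)
  rwa [Q.Deltahat_eq, Q.sliceL_vec, Q.sl_flip] at this

/-- The cyclic vector. -/
def DiscreteKacQG.Om : H := Q.Lam 1

lemma DiscreteKacQG.phihat_eq {b : B H} (hb : b ∈ Q.Mhat) :
    Q.phihat b = ⟪Q.Om, b Q.Om⟫ := by
  unfold Om
  rw [Q.Lam_act b hb 1 (one_mem _), mul_one, Q.Lam_inner 1 (one_mem _) b hb, star_one, one_mul]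

lemma DiscreteKacQG.inner_Om : ⟪Q.Om, Q.Om⟫ = 1 := by
  have := Q.phihat_eq (one_mem _)
  rw [Q.phihat_state.1] at this
  exact this.symm

lemma DiscreteKacQG.norm_Om : ‖Q.Om‖ = 1 := by
  have := Q.inner_Om
  rw [inner_self_C] at this
  have h2 : ‖Q.Om‖ ^ 2 = 1 := by exact_mod_cast this
  nlinarith [norm_nonneg Q.Om]

lemma DiscreteKacQG.scalarA {y : B H} (hy : y ∈ Q.Mhat) (hy' : y ∈ Q.M.commutant) :
    y = Q.phihat y • (1 : B H) := by
  have hP : Q.Phi y = Q.sq.amp y := by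
    unfold LCQG.Phi
    rw [(Q.W_comm_l hy').eq, mul_assoc, Q.W_unitary_r, mul_one]
  ext1 b
  refine ext_inner_left ℂ fun a => ?_
  have := Q.slA_inv hy a b
  rw [hP, HT.sl_amp, map_smul, Q.phihat_state.1, smul_eq_mul, mul_one] at this
  rw [this]
  simp [inner_smul_right, mul_comm]

lemma DiscreteKacQG.scalarB {x : B H} (hx : x ∈ Q.M) (hx' : x ∈ Q.Mhat) :
    x = Q.phihat x • (1 : B H) := by
  have hP : Q.Phi x = Q.sq.ampR x := by
    have h1 := Q.Delta_V x hx
    rw [Q.tensorOp_l, Q.tensorOp_r, (Q.V_comm_l hx').eq, mul_assoc _ Q.V, Q.V_unitary_r,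
      mul_one] at h1
    unfold LCQG.Phi
    rw [← h1]
    have : Q.W * (star Q.W * Q.sq.ampR x * Q.W) * star Q.W
      = (Q.W * star Q.W) * Q.sq.ampR x * (Q.W * star Q.W) := by noncomm_ring
    rw [this, Q.W_unitary_r, mul_one, one_mul]
  ext1 b
  refine ext_inner_left ℂ fun a => ?_
  have := Q.slB_inv hx' a b
  have e : Q.sq.ampR x = Q.sq.swap.amp x := rfl
  rw [hP, e, HT.sl_amp, map_smul, Q.phihat_state.1, smul_eq_mul, mul_one] at this
  rw [this]
  simp [inner_smul_right, mul_comm]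

lemma DiscreteKacQG.Phi_comm_l {y b : B H} (hy : y ∈ Q.Mhat) (hb : b ∈ Q.Mhat.commutant) :
    Commute (Q.Phi y) (Q.sq.amp b) :=
  Q.sq.swap.commute_of_sl fun a a' => comm_of_mem_commutant _ (Q.slB_mem hy a a') hb

lemma DiscreteKacQG.Phi_vec {y : B H} (hy : y ∈ Q.Mhat) (a a' : H) :
    ⟪Q.tmul Q.Om a, Q.Phi y (Q.tmul Q.Om a')⟫ = ⟪a, a'⟫ * Q.phihat y := by
  rw [← Q.slB_inv hy a a', Q.phihat_eq (Q.slB_mem hy a a'), HT.inner_sl]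
  rfl

lemma DiscreteKacQG.u_mem (a a' : H) : Q.sq.sl Q.W a a' ∈ Q.Mhat :=
  mem_of_comm_commutant _ fun _ hb => Q.sq.sl_commute (Q.W_comm_r hb) a a'

end Scalars

section Pentagon

variable {H H2 K : Type*}
  [NormedAddCommGroup H] [InnerProductSpace ℂ H] [CompleteSpace H]
  [NormedAddCommGroup H2] [InnerProductSpace ℂ H2] [CompleteSpace H2]
  [NormedAddCommGroup K] [InnerProductSpace ℂ K] [CompleteSpace K]

/-- conjugation by an operator with inverse -/
lemma conj_commute {R : Type*} [Ring R] {w v x y : R} (h1 : v * w = 1) (h2 : w * v = 1)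
    (h : Commute x (w * y * v)) : Commute (v * x * w) y := by
  have e := h.eq
  change v * x * w * y = y * (v * x * w)
  calc v * x * w * y = v * (x * (w * y * v)) * w := by
        rw [show v * (x * (w * y * v)) * w = v * x * w * y * (v * w) by noncomm_ring, h1, mul_one]
    _ = v * (w * y * v * x) * w := by rw [e]
    _ = (v * w) * y * (v * x * w) := by noncomm_ring
    _ = _ := by rw [h1, one_mul]

variable (Q : DiscreteKacQG H H2) (R : Tri Q.sq K)

lemma DiscreteKacQG.comm_pent_i {b : B H} (hb : b ∈ Q.Mhat.commutant) :
    Commute (R.p2.amp Q.W) (R.p1.ampR (star Q.W * Q.sq.amp b * Q.W)) := by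
  refine R.comm_12_23 Q.Mhat (fun c hc => Q.W_comm_r hc) fun y hy => ?_
  exact conj_commute Q.W_unitary_l Q.W_unitary_r (Q.Phi_comm_l hy hb).symm

lemma DiscreteKacQG.comm_pent_ii {b : B H} (hb : b ∈ Q.M.commutant) :
    Commute (R.p2.amp (Q.W * Q.sq.ampR b * star Q.W)) (R.p1.ampR Q.W) := by
  refine R.comm_12_23 Q.M.commutant (fun c hc => ?_) fun y hy => Q.W_comm_l hy
  rw [Q.M.commutant_commutant] at hc
  refine conj_commute Q.W_unitary_r Q.W_unitary_l ?_
  have := Q.Delta_mem c hc 1 (one_mem _) b hb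
  rw [Q.tensorOp_r, Q.tensorOp_r] at this
  exact this.symm

lemma DiscreteKacQG.comm_pent_iv :
    Commute (R.p2.amp Q.W) (R.p1.ampR Q.V) :=
  R.comm_12_23 Q.Mhat (fun _ hc => Q.W_comm_r hc) fun _ hy => Q.V_comm_l hy

/-- legs -/
def DiscreteKacQG.W12 : B K := R.p2.amp Q.W
/-- legs -/
def DiscreteKacQG.W23 : B K := R.p1.ampR Q.W
/-- legs -/
def DiscreteKacQG.F23 : B K := R.p1.ampR Q.flipU
/-- legs -/
def DiscreteKacQG.W13 : B K := Q.F23 R * Q.W12 R * Q.F23 R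
/-- the pentagon defect -/
def DiscreteKacQG.TT : B K :=
  star (Q.W12 R) * Q.W23 R * Q.W12 R * star (Q.W23 R) * star (Q.W13 R)

lemma DiscreteKacQG.F23_sq : Q.F23 R * Q.F23 R = 1 := by
  unfold F23
  rw [← HT.ampR_mul, Q.flip_mul_flip, HT.ampR_one]

lemma DiscreteKacQG.F23_star : star (Q.F23 R) = Q.F23 R := by
  unfold F23
  rw [← HT.ampR_star, Q.star_flip]

lemma DiscreteKacQG.W12_l : star (Q.W12 R) * Q.W12 R = 1 := by
  unfold W12
  rw [← HT.amp_star, ← HT.amp_mul, Q.W_unitary_l, HT.amp_one]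
lemma DiscreteKacQG.W12_r : Q.W12 R * star (Q.W12 R) = 1 := by
  unfold W12
  rw [← HT.amp_star, ← HT.amp_mul, Q.W_unitary_r, HT.amp_one]
lemma DiscreteKacQG.W23_l : star (Q.W23 R) * Q.W23 R = 1 := by
  unfold W23
  rw [← HT.ampR_star, ← HT.ampR_mul, Q.W_unitary_l, HT.ampR_one]
lemma DiscreteKacQG.W23_r : Q.W23 R * star (Q.W23 R) = 1 := by
  unfold W23
  rw [← HT.ampR_star, ← HT.ampR_mul, Q.W_unitary_r, HT.ampR_one]

lemma DiscreteKacQG.W12_mem : Q.W12 R ∈ unitary (B K) :=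
  Unitary.mem_iff.2 ⟨Q.W12_l R, Q.W12_r R⟩
lemma DiscreteKacQG.W23_mem : Q.W23 R ∈ unitary (B K) :=
  Unitary.mem_iff.2 ⟨Q.W23_l R, Q.W23_r R⟩
lemma DiscreteKacQG.F23_mem : Q.F23 R ∈ unitary (B K) := by
  rw [Unitary.mem_iff, Q.F23_star]
  exact ⟨Q.F23_sq R, Q.F23_sq R⟩
lemma DiscreteKacQG.W13_mem : Q.W13 R ∈ unitary (B K) :=
  mul_mem (mul_mem (Q.F23_mem R) (Q.W12_mem R)) (Q.F23_mem R)
lemma DiscreteKacQG.TT_mem : Q.TT R ∈ unitary (B K) :=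
  mul_mem (mul_mem (mul_mem (mul_mem (Unitary.star_mem (Q.W12_mem R)) (Q.W23_mem R)) (Q.W12_mem R))
    (Unitary.star_mem (Q.W23_mem R))) (Unitary.star_mem (Q.W13_mem R))

lemma DiscreteKacQG.F23_leg2 (b : B H) :
    Q.F23 R * R.p1.ampR (Q.sq.amp b) = R.p1.ampR (Q.sq.ampR b) * Q.F23 R := by
  unfold F23
  rw [← HT.ampR_mul, Q.flip_amp, HT.ampR_mul]

lemma DiscreteKacQG.F23_leg3 (b : B H) :
    Q.F23 R * R.p1.ampR (Q.sq.ampR b) = R.p1.ampR (Q.sq.amp b) * Q.F23 R := by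
  unfold F23
  rw [← HT.ampR_mul, Q.flip_ampR, HT.ampR_mul]

lemma DiscreteKacQG.W12_leg3 (b : B H) : Commute (Q.W12 R) (R.p1.ampR (Q.sq.ampR b)) := by
  rw [← R.leg3]
  exact R.p2.amp_comm_ampR _ _

lemma DiscreteKacQG.W13_leg2 (b : B H) : Commute (Q.W13 R) (R.p1.ampR (Q.sq.amp b)) := by
  change Q.W13 R * _ = _ * Q.W13 R
  unfold W13
  rw [mul_assoc, F23_leg2, mul_assoc, ← mul_assoc (Q.W12 R), (Q.W12_leg3 R b).eq,
    ← mul_assoc, ← mul_assoc, F23_leg3]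
  noncomm_ring

/-- inverse commutation -/
lemma commute_star_of_unitary {A : Type*} [Ring A] [StarRing A] {u x : A} (hu : u ∈ unitary A)
    (h : Commute u x) : Commute (star u) x := by
  obtain ⟨h1, h2⟩ := Unitary.mem_iff.1 hu
  change star u * x = x * star u
  calc star u * x = star u * (x * u) * star u := by
        rw [mul_assoc, mul_assoc, h2, mul_one]
    _ = (star u * u) * x * star u := by rw [← h.eq]; noncomm_ring
    _ = _ := by rw [h1, one_mul]

lemma DiscreteKacQG.TT_i {b : B H} (hb : b ∈ Q.Mhat.commutant) :
    Commute (Q.TT R) (R.p1.ampR (Q.sq.amp b)) := by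
  set β := R.p1.ampR (Q.sq.amp b) with hβ
  have h13 : Commute (star (Q.W13 R)) β := commute_star_of_unitary (Q.W13_mem R) (Q.W13_leg2 R b)
  have h12 : Commute (star (Q.W12 R)) β := by
    refine commute_star_of_unitary (Q.W12_mem R) ?_
    change R.p2.amp Q.W * R.p1.ampR (Q.sq.amp b) = R.p1.ampR (Q.sq.amp b) * R.p2.amp Q.W
    rw [← R.leg2, ← HT.amp_mul, ← HT.amp_mul, (Q.W_comm_r hb).eq]
  have hz : Commute (Q.W12 R) (star (Q.W23 R) * β * Q.W23 R) := by
    have := Q.comm_pent_i R hb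
    rwa [HT.ampR_mul, HT.ampR_mul, HT.ampR_star] at this
  have h4 : Commute (Q.W23 R * Q.W12 R * star (Q.W23 R)) β := by
    have := conj_commute (w := star (Q.W23 R)) (v := Q.W23 R) (Q.W23_r R) (Q.W23_l R) hz
    exact this
  have : Q.TT R = star (Q.W12 R) * (Q.W23 R * Q.W12 R * star (Q.W23 R)) * star (Q.W13 R) := by
    unfold TT; noncomm_ring
  rw [this]
  exact (h12.mul_left h4).mul_left h13

lemma DiscreteKacQG.TT_ii {b : B H} (hb : b ∈ Q.M.commutant) :
    Commute (Q.TT R) (R.p1.ampR (Q.sq.amp b)) := by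
  set β := R.p1.ampR (Q.sq.amp b) with hβ
  have h13 : Commute (star (Q.W13 R)) β := commute_star_of_unitary (Q.W13_mem R) (Q.W13_leg2 R b)
  have h23 : Commute (star (Q.W23 R)) β := by
    refine commute_star_of_unitary (Q.W23_mem R) ?_
    change R.p1.ampR Q.W * R.p1.ampR (Q.sq.amp b) = R.p1.ampR (Q.sq.amp b) * R.p1.ampR Q.W
    rw [← HT.ampR_mul, ← HT.ampR_mul, (Q.W_comm_l hb).eq]
  have hz : Commute (Q.W23 R) (Q.W12 R * β * star (Q.W12 R)) := by
    have := (Q.comm_pent_ii R hb).symm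
    rwa [HT.amp_mul, HT.amp_mul, HT.amp_star, R.leg2] at this
  have h4 : Commute (star (Q.W12 R) * Q.W23 R * Q.W12 R) β := by
    exact conj_commute (w := Q.W12 R) (v := star (Q.W12 R)) (Q.W12_l R) (Q.W12_r R) hz
  unfold TT
  exact (h4.mul_left h23).mul_left h13

lemma DiscreteKacQG.TT_iii {c : B H} (hc : c ∈ Q.Mhat.commutant) :
    Commute (Q.TT R) (R.p1.ampR (Q.sq.ampR c)) := by
  set β := R.p1.ampR (Q.sq.ampR c) with hβ
  have h12 : Commute (Q.W12 R) β := Q.W12_leg3 R c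
  have h23 : Commute (Q.W23 R) β := by
    change R.p1.ampR Q.W * R.p1.ampR (Q.sq.ampR c) = R.p1.ampR (Q.sq.ampR c) * R.p1.ampR Q.W
    rw [← HT.ampR_mul, ← HT.ampR_mul, (Q.W_comm_r hc).eq]
  have h12' : Commute (Q.W12 R) (R.p1.ampR (Q.sq.amp c)) := by
    change R.p2.amp Q.W * R.p1.ampR (Q.sq.amp c) = R.p1.ampR (Q.sq.amp c) * R.p2.amp Q.W
    rw [← R.leg2, ← HT.amp_mul, ← HT.amp_mul, (Q.W_comm_r hc).eq]
  have h13 : Commute (Q.W13 R) β := by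
    change Q.W13 R * _ = _ * Q.W13 R
    unfold W13
    rw [mul_assoc, F23_leg3, mul_assoc, ← mul_assoc (Q.W12 R), h12'.eq,
      ← mul_assoc, ← mul_assoc, F23_leg2]
    noncomm_ring
  unfold TT
  exact ((((commute_star_of_unitary (Q.W12_mem R) h12).mul_left h23).mul_left h12).mul_left
    (commute_star_of_unitary (Q.W23_mem R) h23)).mul_left (commute_star_of_unitary (Q.W13_mem R) h13)

lemma DiscreteKacQG.slice_Delta_vec_mem {x : B H} (hx : x ∈ Q.M) (a a' : H) :
    Q.sq.sl (star Q.W * Q.sq.ampR x * Q.W) a a' ∈ Q.M := by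
  have := Q.slice_Delta_mem (vecFunctional H a' a) x hx
  rwa [Q.sliceL_vec, Q.tensorOp_r] at this

lemma DiscreteKacQG.key_iv {x : B H} (hx : x ∈ Q.M) :
    star (Q.W23 R) * (Q.F23 R * R.p2.amp (star Q.W * Q.sq.ampR x * Q.W) * Q.F23 R) * Q.W23 R
      = R.p1.ampR Q.V * R.p2.amp (star Q.W * Q.sq.ampR x * Q.W) * star (R.p1.ampR Q.V) := by
  refine R.p1.sl_ext fun a a' => ?_
  unfold W23 F23
  rw [← HT.ampR_star, ← HT.ampR_star, HT.sl_mul_ampR, HT.sl_mul_ampR, HT.sl_ampR_mul, HT.sl_ampR_mul,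
    HT.sl_mul_ampR, HT.sl_ampR_mul, R.sl1]
  have hd := Q.slice_Delta_vec_mem hx a a'
  set d := Q.sq.sl (star Q.W * Q.sq.ampR x * Q.W) a a'
  have h1 := Q.Delta_V d hd
  rw [Q.tensorOp_l, Q.tensorOp_r] at h1
  rw [← h1, Q.flip_amp, mul_assoc _ Q.flipU, Q.flip_mul_flip, mul_one]

lemma DiscreteKacQG.TT_iv {x : B H} (hx : x ∈ Q.M) :
    Commute (Q.TT R) (R.p1.ampR (Q.sq.ampR x)) := by
  have hk := Q.key_iv R hx
  set V23 := R.p1.ampR Q.V with hV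
  have hVu : V23 * star V23 = 1 := by
    rw [hV, ← HT.ampR_star, ← HT.ampR_mul, Q.V_unitary_r, HT.ampR_one]
  have hVu2 : star V23 * V23 = 1 := by
    rw [hV, ← HT.ampR_star, ← HT.ampR_mul, Q.V_unitary_l, HT.ampR_one]
  have hVm : V23 ∈ unitary (B K) := Unitary.mem_iff.2 ⟨hVu2, hVu⟩
  set x2 := R.p1.ampR (Q.sq.amp x) with hx2
  set x3 := R.p1.ampR (Q.sq.ampR x) with hx3
  have hD12 : R.p2.amp (star Q.W * Q.sq.ampR x * Q.W) = star (Q.W12 R) * x2 * Q.W12 R := by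
    rw [HT.amp_mul, HT.amp_mul, HT.amp_star, R.leg2]; rfl
  have hD23 : star (Q.W23 R) * x3 * Q.W23 R = V23 * x2 * star V23 := by
    have := congrArg R.p1.ampR (Q.Delta_V x hx)
    rw [Q.tensorOp_l, Q.tensorOp_r, HT.ampR_mul, HT.ampR_mul, HT.ampR_mul, HT.ampR_mul, HT.ampR_star,
      HT.ampR_star] at this
    exact this
  rw [hD12] at hk
  have hV12 : Commute (Q.W12 R) V23 := Q.comm_pent_iv R
  have hV12' : Commute (star V23) (Q.W12 R) := commute_star_of_unitary hVm hV12.symm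
  have hV12'' : Commute (star (Q.W12 R)) V23 := commute_star_of_unitary (Q.W12_mem R) hV12
  -- W13* x3 W13
  have h13 : star (Q.W13 R) * x3 * Q.W13 R
      = Q.F23 R * (star (Q.W12 R) * x2 * Q.W12 R) * Q.F23 R := by
    have e := Q.F23_leg3 R x
    unfold W13
    rw [star_mul, star_mul, F23_star]
    calc Q.F23 R * (star (Q.W12 R) * Q.F23 R) * x3 * (Q.F23 R * Q.W12 R * Q.F23 R)
        = Q.F23 R * star (Q.W12 R) * (Q.F23 R * x3) * Q.F23 R * Q.W12 R * Q.F23 R := by noncomm_ring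
      _ = Q.F23 R * star (Q.W12 R) * x2 * (Q.F23 R * Q.F23 R) * Q.W12 R * Q.F23 R := by
          rw [e]; noncomm_ring
      _ = _ := by rw [F23_sq]; noncomm_ring
  rw [← h13] at hk
  have hk2 : star (Q.W23 R) * (star (Q.W13 R) * x3 * Q.W13 R) * Q.W23 R
      = star (Q.W12 R) * (star (Q.W23 R) * x3 * Q.W23 R) * Q.W12 R := by
    rw [hk, hD23]
    calc V23 * (star (Q.W12 R) * x2 * Q.W12 R) * star V23
        = (V23 * star (Q.W12 R)) * x2 * (Q.W12 R * star V23) := by noncomm_ring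
      _ = (star (Q.W12 R) * V23) * x2 * (star V23 * Q.W12 R) := by rw [hV12''.eq, hV12'.eq]
      _ = _ := by noncomm_ring
  have h12 : Commute (star (Q.W12 R)) x3 := commute_star_of_unitary (Q.W12_mem R) (Q.W12_leg3 R x)
  -- assemble
  have key2 : Q.W12 R * (star (Q.W23 R) * (star (Q.W13 R) * x3))
      = star (Q.W23 R) * x3 * Q.W23 R * Q.W12 R * star (Q.W23 R) * star (Q.W13 R) := by
    have h1 : star (Q.W23 R) * (star (Q.W13 R) * x3)
        = (star (Q.W23 R) * (star (Q.W13 R) * x3 * Q.W13 R) * Q.W23 R) * star (Q.W23 R)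
          * star (Q.W13 R) := by
      have a1 := Q.W23_r R
      have a2 := (Unitary.mem_iff.1 (Q.W13_mem R)).2
      calc star (Q.W23 R) * (star (Q.W13 R) * x3)
          = star (Q.W23 R) * (star (Q.W13 R) * x3 * (Q.W13 R * (1 * star (Q.W13 R)))) := by
            rw [one_mul, a2, mul_one]
        _ = _ := by rw [← a1]; noncomm_ring
    rw [h1, hk2]
    have a3 := Q.W12_r R
    calc Q.W12 R * (star (Q.W12 R) * (star (Q.W23 R) * x3 * Q.W23 R) * Q.W12 R * star (Q.W23 R)
          * star (Q.W13 R))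
        = (Q.W12 R * star (Q.W12 R)) * (star (Q.W23 R) * x3 * Q.W23 R) * Q.W12 R * star (Q.W23 R)
          * star (Q.W13 R) := by noncomm_ring
      _ = _ := by rw [a3]; noncomm_ring
  change Q.TT R * x3 = x3 * Q.TT R
  unfold TT
  calc star (Q.W12 R) * Q.W23 R * Q.W12 R * star (Q.W23 R) * star (Q.W13 R) * x3
      = star (Q.W12 R) * Q.W23 R * (Q.W12 R * (star (Q.W23 R) * (star (Q.W13 R) * x3))) := by
        noncomm_ring
    _ = star (Q.W12 R) * (Q.W23 R * star (Q.W23 R)) * x3 * Q.W23 R * Q.W12 R * star (Q.W23 R)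
          * star (Q.W13 R) := by rw [key2]; noncomm_ring
    _ = (star (Q.W12 R) * x3) * Q.W23 R * Q.W12 R * star (Q.W23 R) * star (Q.W13 R) := by
        rw [W23_r, mul_one]
    _ = _ := by rw [h12.eq]; noncomm_ring

lemma DiscreteKacQG.TT_slice (a a' : H) :
    R.p1.sl (Q.TT R) a a'
      = ⟪Q.sq.t Q.Om Q.Om, R.p1.sl (Q.TT R) a a' (Q.sq.t Q.Om Q.Om)⟫ • (1 : B H2) := by
  have c1 : ∀ b ∈ Q.Mhat.commutant, Commute (R.p1.sl (Q.TT R) a a') (Q.sq.amp b) :=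
    fun b hb => R.p1.sl_commute (Q.TT_i R hb) a a'
  have c2 : ∀ b ∈ Q.M.commutant, Commute (R.p1.sl (Q.TT R) a a') (Q.sq.amp b) :=
    fun b hb => R.p1.sl_commute (Q.TT_ii R hb) a a'
  have c3 : ∀ b ∈ Q.Mhat.commutant, Commute (R.p1.sl (Q.TT R) a a') (Q.sq.ampR b) :=
    fun b hb => R.p1.sl_commute (Q.TT_iii R hb) a a'
  have c4 : ∀ b ∈ Q.M, Commute (R.p1.sl (Q.TT R) a a') (Q.sq.ampR b) :=
    fun b hb => R.p1.sl_commute (Q.TT_iv R hb) a a'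
  set S := R.p1.sl (Q.TT R) a a'
  have hl : ∀ c c', ∃ l : ℂ, Q.sq.sl S c c' = l • (1 : B H) := fun c c' =>
    ⟨_, Q.scalarA (mem_of_comm_commutant _ fun b hb => Q.sq.sl_commute (c3 b hb) c c')
      (mem_commutant_of_comm _ fun b hb => Q.sq.sl_commute (c4 b hb) c c')⟩
  have hm : ∀ d d', ∃ l : ℂ, Q.sq.swap.sl S d d' = l • (1 : B H) := fun d d' =>
    ⟨_, Q.scalarB (mem_of_comm_commutant _ fun b hb => Q.sq.swap.sl_commute (c2 b hb) d d')
      (mem_of_comm_commutant _ fun b hb => Q.sq.swap.sl_commute (c1 b hb) d d')⟩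
  choose l hl using hl
  choose m hm using hm
  have el : ∀ c c' d d', ⟪Q.sq.t c d, S (Q.sq.t c' d')⟫ = l c c' * ⟪d, d'⟫ := by
    intro c c' d d'
    rw [← Q.sq.inner_sl, hl]
    simp [inner_smul_right]
  have em : ∀ c c' d d', ⟪Q.sq.t c d, S (Q.sq.t c' d')⟫ = m d d' * ⟪c, c'⟫ := by
    intro c c' d d'
    have := Q.sq.swap.inner_sl S d d' c c'
    rw [HT.swap_t, HT.swap_t] at this
    rw [← this, hm]
    simp [inner_smul_right]
  refine Q.sq.ext_t fun c' d' => Q.sq.ext_v fun c d => ?_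
  have h1 := em c c' Q.Om Q.Om
  rw [el, Q.inner_Om, mul_one] at h1
  rw [el, h1, em, Q.inner_Om, mul_one]
  simp [inner_smul_right, Q.sq.inner_t, mul_assoc]

lemma DiscreteKacQG.exists_z : ∃ z : B H, Q.TT R = R.p1.amp z ∧ ∀ h, ‖z h‖ = ‖h‖ := by
  set v := Q.sq.t Q.Om Q.Om with hv
  have hvn : ‖v‖ = 1 := by rw [hv, HT.norm_t, Q.norm_Om, mul_one]
  let z := R.p1.swap.sl (Q.TT R) v v
  have hz : Q.TT R = R.p1.amp z := by
    refine R.p1.sl_ext fun a a' => ?_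
    rw [Q.TT_slice R a a']
    ext1 w
    rw [R.p1.sl_apply (R.p1.amp z), R.p1.amp_t, R.p1.bra_t, R.p1.swap.inner_sl, R.p1.inner_sl]
    rfl
  refine ⟨z, hz, fun h => ?_⟩
  have h1 : ‖Q.TT R (R.p1.t h v)‖ = ‖R.p1.t h v‖ := by
    have hs := (Unitary.mem_iff.1 (Q.TT_mem R)).1
    have e : ⟪Q.TT R (R.p1.t h v), Q.TT R (R.p1.t h v)⟫ = ⟪R.p1.t h v, R.p1.t h v⟫ := by
      rw [← ContinuousLinearMap.adjoint_inner_right, ← ContinuousLinearMap.star_eq_adjoint]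
      change ⟪_, (star (Q.TT R) * Q.TT R) _⟫ = _
      rw [hs]; rfl
    rw [inner_self_C, inner_self_C] at e
    have e2 : ‖Q.TT R (R.p1.t h v)‖ ^ 2 = ‖R.p1.t h v‖ ^ 2 := by exact_mod_cast e
    exact (sq_eq_sq₀ (norm_nonneg _) (norm_nonneg _)).1 e2
  rw [hz, R.p1.amp_t, R.p1.norm_t, R.p1.norm_t, hvn, mul_one, mul_one] at h1
  exact h1

lemma Tri.bra_flip (v : H2) (d ζ : H) :
    R.p2.swap.bra ζ (Q.F23 R (R.p2.t v d)) = Q.sq.t (Q.sq.swap.bra ζ v) d := by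
  have : R.p2.swap.bra ζ ∘L Q.F23 R ∘L R.p2.swap.ket d = Q.sq.swap.ket d ∘L Q.sq.swap.bra ζ := by
    refine Q.sq.ext_t fun a b => ?_
    change R.p2.swap.bra ζ (Q.F23 R (R.p2.t (Q.sq.t a b) d)) = Q.sq.t (Q.sq.swap.bra ζ (Q.sq.swap.t b a)) d
    rw [← R.compat]
    unfold DiscreteKacQG.F23
    rw [R.p1.ampR_t, Q.sq_t, Q.flipU_apply, ← Q.sq_t, R.compat, ← R.p2.swap_t, R.p2.swap.bra_t,
      Q.sq.swap.bra_t, map_smul]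
    rfl
  exact congrArg (fun T => T v) this

/-- The slice form of the pentagon equation. -/
lemma DiscreteKacQG.pentagon : ∃ z : B H, (∀ h, ‖z h‖ = ‖h‖) ∧ ∀ e k c d ζ w : H,
    ⟪Q.sq.t w ζ, Q.Phi (Q.sq.sl Q.W e k) (Q.sq.t d c)⟫
      = ⟪w, Q.sq.sl Q.W e (z (Q.sq.swap.bra ζ (Q.W (Q.sq.t k c)))) d⟫ := by
  obtain ⟨R⟩ := exists_tri Q.sq (HT.ofCompletion H H2)
  obtain ⟨z, hz, hzn⟩ := Q.exists_z R
  refine ⟨z, hzn, fun e k c d ζ w => ?_⟩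
  have h1 : Q.W23 R * Q.W12 R * star (Q.W23 R) = Q.W12 R * R.p1.amp z * Q.W13 R := by
    rw [← hz]
    unfold TT
    have a1 := Q.W12_r R
    have a2 := (Unitary.mem_iff.1 (Q.W13_mem R)).1
    calc Q.W23 R * Q.W12 R * star (Q.W23 R)
        = (Q.W12 R * star (Q.W12 R)) * (Q.W23 R * Q.W12 R * star (Q.W23 R))
          * (star (Q.W13 R) * Q.W13 R) := by rw [a1, a2, one_mul, mul_one]
      _ = _ := by noncomm_ring
  have h2 : Q.Phi (Q.sq.sl Q.W e k) = R.p1.sl (Q.W12 R * R.p1.amp z * Q.W13 R) e k := by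
    rw [← h1]
    unfold W12 W23
    rw [← HT.ampR_star, HT.sl_mul_ampR, HT.sl_ampR_mul, R.sl1]
    rfl
  rw [h2, R.p1.inner_sl, Q.sq.inner_sl]
  change ⟪_, Q.W12 R (R.p1.amp z (Q.F23 R (Q.W12 R (Q.F23 R (R.p1.t k (Q.sq.t d c))))))⟫ = _
  have h3 : Q.F23 R (R.p1.t k (Q.sq.t d c)) = R.p2.t (Q.sq.t k c) d := by
    unfold F23
    rw [R.p1.ampR_t, Q.sq_t, Q.flipU_apply, ← Q.sq_t, R.compat]
  rw [h3, ← R.leg1]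
  have h4 : Q.W12 R (R.p2.t (Q.sq.t k c) d) = R.p2.t (Q.W (Q.sq.t k c)) d := R.p2.amp_t _ _ _
  rw [h4, R.compat]
  change ⟪R.p2.swap.t ζ _, _⟫ = _
  rw [← R.p2.swap.inner_bra]
  change ⟪_, R.p2.swap.bra ζ (R.p2.swap.ampR Q.W (R.p2.swap.ampR (Q.sq.amp z) _))⟫ = _
  rw [R.p2.swap.bra_ampR, R.p2.swap.bra_ampR, R.bra_flip, Q.sq.amp_t]

end Pentagon

section AdjInv

variable {H H2 : Type*}
  [NormedAddCommGroup H] [InnerProductSpace ℂ H] [CompleteSpace H]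
  [NormedAddCommGroup H2] [InnerProductSpace ℂ H2] [CompleteSpace H2]

lemma dsum {ι κ : Type*} {f : ι → κ → ℝ} {r : ι → ℝ} {s : κ → ℝ} {T : ℝ}
    (h0 : ∀ i c, 0 ≤ f i c) (hr : ∀ i, HasSum (f i) (r i))
    (hs : ∀ c, HasSum (fun i => f i c) (s c)) (hT : HasSum r T) : HasSum s T := by
  have h1 : Summable (fun q : ι × κ => f q.1 q.2) := by
    rw [summable_prod_of_nonneg (fun q => h0 _ _)]
    refine ⟨fun i => (hr i).summable, hT.summable.congr fun i => ?_⟩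
    exact (hr i).tsum_eq.symm
  have e1 : ∑' q : ι × κ, f q.1 q.2 = T := (h1.hasSum.prod_fiberwise hr).unique hT
  have h2 : HasSum (fun q : κ × ι => f q.2 q.1) T := by
    rw [← e1]
    exact (Equiv.prodComm κ ι).hasSum_iff.2 h1.hasSum
  exact h2.prod_fiberwise hs

lemma star_inner_right (x : B H) (a b : H) : ⟪a, star x b⟫ = ⟪x a, b⟫ := by
  rw [ContinuousLinearMap.star_eq_adjoint, ContinuousLinearMap.adjoint_inner_right]

lemma star_inner_left (x : B H) (a b : H) : ⟪star x a, b⟫ = ⟪a, x b⟫ := by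
  rw [ContinuousLinearMap.star_eq_adjoint, ContinuousLinearMap.adjoint_inner_left]

lemma polar_C (x y : H) : ⟪x, y⟫ = (((‖x + y‖ ^ 2 : ℝ) : ℂ) - ((‖x - y‖ ^ 2 : ℝ) : ℂ)
    + (((‖x - Complex.I • y‖ ^ 2 : ℝ) : ℂ) - ((‖x + Complex.I • y‖ ^ 2 : ℝ) : ℂ)) * Complex.I)
      * (1 / 4) := by
  simp only [← inner_self_C, inner_add_left, inner_add_right, inner_sub_left, inner_sub_right,
    inner_smul_left, inner_smul_right, Complex.conj_I]
  ring_nf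
  simp only [Complex.I_sq]
  ring

lemma isom_norm {x : B H} (hx : star x * x = 1) (v : H) : ‖x v‖ = ‖v‖ := by
  have e : ⟪x v, x v⟫ = ⟪v, v⟫ := by
    rw [← star_inner_right]
    change ⟪_, (star x * x) _⟫ = _
    rw [hx]; rfl
  rw [inner_self_C, inner_self_C] at e
  have e2 : ‖x v‖ ^ 2 = ‖v‖ ^ 2 := by exact_mod_cast e
  exact (sq_eq_sq₀ (norm_nonneg _) (norm_nonneg _)).1 e2

variable (Q : DiscreteKacQG H H2) {ι : Type*} (e : HilbertBasis ι ℂ H)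

lemma DiscreteKacQG.norm_Om_sq {b : B H} (hb : b ∈ Q.Mhat) :
    ((‖b Q.Om‖ ^ 2 : ℝ) : ℂ) = Q.phihat (star b * b) := by
  rw [Q.phihat_eq (mul_mem (star_mem hb) hb), ← inner_self_C, ← star_inner_right]
  rfl

lemma DiscreteKacQG.norm_star_Om {b : B H} (hb : b ∈ Q.Mhat) :
    ‖star b Q.Om‖ ^ 2 = ‖b Q.Om‖ ^ 2 := by
  have h1 := Q.norm_Om_sq hb
  have h2 := Q.norm_Om_sq (star_mem hb)
  rw [star_star, Q.phihat_tracial _ hb _ (star_mem hb), ← h1] at h2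
  exact_mod_cast h2

lemma DiscreteKacQG.sum_star_Om (k : H) :
    HasSum (fun i => ‖star (Q.sq.sl Q.W (e i) k) Q.Om‖ ^ 2) (‖k‖ ^ 2) := by
  have h := Q.sq.parseval_norm e (Q.W (Q.sq.t k Q.Om))
  rw [isom_norm Q.W_unitary_l, Q.sq.norm_t, Q.norm_Om, mul_one] at h
  refine h.congr_fun ?_ |> id
  intro i
  exact Q.norm_star_Om (Q.u_mem _ _)

lemma DiscreteKacQG.Phi_star (y : B H) : star (Q.Phi y) = Q.Phi (star y) := by
  unfold LCQG.Phi
  rw [star_mul, star_mul, star_star, HT.amp_star]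
  noncomm_ring

lemma DiscreteKacQG.Phi_mul (x y : B H) : Q.Phi x * Q.Phi y = Q.Phi (x * y) := by
  unfold LCQG.Phi
  rw [HT.amp_mul]
  calc Q.W * Q.sq.amp x * star Q.W * (Q.W * Q.sq.amp y * star Q.W)
      = Q.W * Q.sq.amp x * (star Q.W * Q.W) * Q.sq.amp y * star Q.W := by noncomm_ring
    _ = _ := by rw [Q.W_unitary_l]; noncomm_ring

lemma DiscreteKacQG.norm_Phi {y : B H} (hy : y ∈ Q.Mhat) (ζ : H) :
    ‖Q.Phi y (Q.sq.t Q.Om ζ)‖ ^ 2 = ‖y Q.Om‖ ^ 2 * ‖ζ‖ ^ 2 := by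
  have h1 := Q.Phi_vec (mul_mem (star_mem hy) hy) ζ ζ
  rw [← Q.norm_Om_sq hy, ← Q.Phi_mul, ← Q.Phi_star] at h1
  change ⟪_, star (Q.Phi y) (Q.Phi y _)⟫ = _ at h1
  rw [star_inner_right, inner_self_C, inner_self_C] at h1
  change ((‖Q.Phi y (Q.sq.t Q.Om ζ)‖ ^ 2 : ℝ) : ℂ) = _ at h1
  rw [mul_comm]
  exact_mod_cast h1

lemma DiscreteKacQG.sum_star (k ζ : H) :
    HasSum (fun i => ‖star (Q.sq.sl Q.W (e i) k) ζ‖ ^ 2) (‖k‖ ^ 2 * ‖ζ‖ ^ 2) := by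
  obtain ⟨z, hz, hp⟩ := Q.pentagon
  have hs : ∀ i c, Q.sq.swap.bra c (Q.Phi (star (Q.sq.sl Q.W (e i) k)) (Q.sq.t Q.Om ζ))
      = star (Q.sq.sl Q.W (e i) (z (Q.sq.swap.bra ζ (Q.W (Q.sq.t k c))))) Q.Om := by
    intro i c
    refine ext_inner_left ℂ fun d => ?_
    rw [HT.inner_bra, star_inner_right, ← Q.Phi_star, star_inner_right]
    have := hp (e i) k c d ζ Q.Om
    rw [← inner_conj_symm, HT.swap_t, this, inner_conj_symm]
  have s1 : HasSum (fun c => ‖Q.sq.swap.bra ζ (Q.W (Q.sq.t k (e c)))‖ ^ 2) (‖k‖ ^ 2 * ‖ζ‖ ^ 2) := by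
    refine dsum (f := fun i c => ‖star (Q.sq.sl Q.W (e i)
      (z (Q.sq.swap.bra ζ (Q.W (Q.sq.t k (e c)))))) Q.Om‖ ^ 2)
      (r := fun i => ‖star (Q.sq.sl Q.W (e i) k) Q.Om‖ ^ 2 * ‖ζ‖ ^ 2) (fun i c => by positivity)
      (fun i => ?_) (fun c => ?_) ((Q.sum_star_Om e k).mul_right _)
    · have := Q.sq.swap.parseval_norm e (Q.Phi (star (Q.sq.sl Q.W (e i) k)) (Q.sq.t Q.Om ζ))
      rw [Q.norm_Phi (star_mem (Q.u_mem _ _))] at this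
      simpa only [hs] using this
    · have := Q.sum_star_Om e (z (Q.sq.swap.bra ζ (Q.W (Q.sq.t k (e c)))))
      rwa [hz] at this
  refine dsum (f := fun c i => ‖⟪e i, Q.sq.swap.bra ζ (Q.W (Q.sq.t k (e c)))⟫‖ ^ 2)
    (fun i c => by positivity) (fun c => basis_norm e _) (fun i => ?_) s1
  have := basis_norm e (star (Q.sq.sl Q.W (e i) k) ζ)
  refine this.congr_fun ?_ |> id
  intro c
  rw [HT.inner_bra, star_inner_right, HT.swap_t, ← Q.sq.inner_sl, norm_inner_symm]

lemma DiscreteKacQG.sum_star_inner (k ζ ζ' : H) :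
    HasSum (fun i => ⟪star (Q.sq.sl Q.W (e i) k) ζ, star (Q.sq.sl Q.W (e i) k) ζ'⟫)
      (((‖k‖ ^ 2 : ℝ) : ℂ) * ⟪ζ, ζ'⟫) := by
  have hC : ∀ v, HasSum (fun i => ((‖star (Q.sq.sl Q.W (e i) k) v‖ ^ 2 : ℝ) : ℂ))
      ((‖k‖ ^ 2 * ‖v‖ ^ 2 : ℝ) : ℂ) := fun v => by
    exact_mod_cast Q.sum_star e k v
  have h := (((hC (ζ + ζ')).sub (hC (ζ - ζ'))).add
    (((hC (ζ - Complex.I • ζ')).sub (hC (ζ + Complex.I • ζ'))).mul_right Complex.I)).mul_right (1 / 4)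
  rw [polar_C ζ ζ', ← mul_assoc, mul_add, mul_sub, ← mul_assoc, mul_sub,
    ← Complex.ofReal_mul, ← Complex.ofReal_mul, ← Complex.ofReal_mul, ← Complex.ofReal_mul]
  refine h.congr_fun ?_ |> id
  intro i
  rw [polar_C]
  simp only [map_add, map_sub, map_smul]

lemma DiscreteKacQG.sum_adj (k : H) {y : B H} (hy : y ∈ Q.Mhat) :
    HasSum (fun i => Q.phihat (star (Q.sq.sl Q.W (e i) k) * y * Q.sq.sl Q.W (e i) k))
      (((‖k‖ ^ 2 : ℝ) : ℂ) * Q.phihat y) := by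
  have h := Q.sum_star_inner e k (star y Q.Om) Q.Om
  rw [star_inner_left, ← Q.phihat_eq hy] at h
  refine h.congr_fun ?_ |> id
  intro i
  have hu := Q.u_mem (e i) k
  set u := Q.sq.sl Q.W (e i) k
  rw [mul_assoc, Q.phihat_tracial _ (star_mem hu) _ (mul_mem hy hu),
    Q.phihat_eq (mul_mem (mul_mem hy hu) (star_mem hu)), star_inner_left, star_inner_left]
  rfl

end AdjInv

section Jordan

open NormedSpace

variable {A : Type*} [CStarAlgebra A] [PartialOrder A] [StarOrderedRing A]

lemma pos_bound_pos (T : A →ₗ[ℂ] A) (h1 : T 1 = 1) (hp : ∀ x, 0 ≤ x → 0 ≤ T x)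
    {y : A} (hy : 0 ≤ y) : ‖T y‖ ≤ ‖y‖ := by
  rw [CStarAlgebra.norm_le_iff_le_algebraMap _ (norm_nonneg _) (hp y hy)]
  have h := hp _ (sub_nonneg.2 (IsSelfAdjoint.le_algebraMap_norm_self (a := y) (IsSelfAdjoint.of_nonneg hy)))
  have e : T (algebraMap ℝ A ‖y‖) = algebraMap ℝ A ‖y‖ := by
    rw [IsScalarTower.algebraMap_apply ℝ ℂ A, Algebra.algebraMap_eq_smul_one, map_smul, h1]
  rw [map_sub, e, sub_nonneg] at h
  exact h

lemma pos_bound_sa (T : A →ₗ[ℂ] A) (h1 : T 1 = 1) (hp : ∀ x, 0 ≤ x → 0 ≤ T x)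
    {a : A} (ha : IsSelfAdjoint a) : ‖T a‖ ≤ 3 * ‖a‖ := by
  nontriviality A
  have h0 : 0 ≤ a + algebraMap ℝ A ‖a‖ := by
    have := IsSelfAdjoint.neg_algebraMap_norm_le_self (a := a) ha
    exact neg_le_iff_add_nonneg.1 this
  have e : T (algebraMap ℝ A ‖a‖) = algebraMap ℝ A ‖a‖ := by
    rw [IsScalarTower.algebraMap_apply ℝ ℂ A, Algebra.algebraMap_eq_smul_one, map_smul, h1]
  have h2 := pos_bound_pos T h1 hp h0
  have h3 : ‖algebraMap ℝ A ‖a‖‖ = ‖a‖ := by simp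
  have h4 : T a = T (a + algebraMap ℝ A ‖a‖) - algebraMap ℝ A ‖a‖ := by
    rw [map_add, e]; abel
  calc ‖T a‖ ≤ ‖T (a + algebraMap ℝ A ‖a‖)‖ + ‖algebraMap ℝ A ‖a‖‖ := by
        rw [h4]; exact norm_sub_le _ _
    _ ≤ (‖a‖ + ‖algebraMap ℝ A ‖a‖‖) + ‖algebraMap ℝ A ‖a‖‖ := by
        gcongr; exact h2.trans (norm_add_le _ _)
    _ = 3 * ‖a‖ := by rw [h3]; ring

lemma pos_bound (T : A →ₗ[ℂ] A) (h1 : T 1 = 1) (hp : ∀ x, 0 ≤ x → 0 ≤ T x)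
    (x : A) : ‖T x‖ ≤ 6 * ‖x‖ := by
  have e := realPart_add_I_smul_imaginaryPart x
  have hr := realPart.norm_le x
  have hi := imaginaryPart.norm_le x
  have h2 := pos_bound_sa T h1 hp (realPart x).2
  have h3 := pos_bound_sa T h1 hp (imaginaryPart x).2
  have h4 : T x = T (realPart x : A) + Complex.I • T (imaginaryPart x : A) := by
    conv_lhs => rw [← e]
    rw [map_add, map_smul]
  rw [h4]
  refine (norm_add_le _ _).trans ?_
  rw [norm_smul, Complex.norm_I, one_mul]
  have e1 : ‖((realPart x : selfAdjoint A) : A)‖ = ‖realPart x‖ := rfl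
  have e2 : ‖((imaginaryPart x : selfAdjoint A) : A)‖ = ‖imaginaryPart x‖ := rfl
  rw [e1] at h2
  rw [e2] at h3
  linarith

lemma sandwich_bound (E : A →ₗ[ℂ] A) (hp : ∀ x, 0 ≤ x → 0 ≤ E x)
    {p q : A} (hps : star p = p) (hqs : star q = q) (hqp : q * p = 1) (hpq : p * q = 1)
    (hE : E (p * p) = p * p) (y : A) : ‖q * E (p * y * p) * q‖ ≤ 6 * ‖y‖ := by
  let T : A →ₗ[ℂ] A :=
    { toFun := fun y => q * E (p * y * p) * q
      map_add' := fun y z => by simp [mul_add, add_mul]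
      map_smul' := fun c y => by simp }
  refine pos_bound T ?_ ?_ y
  · change q * E (p * 1 * p) * q = 1
    rw [mul_one, hE, ← mul_assoc, hqp, one_mul, hpq]
  · intro x hx
    change 0 ≤ q * E (p * x * p) * q
    have h1 := star_left_conjugate_nonneg hx p
    rw [hps] at h1
    have h2 := star_left_conjugate_nonneg (hp _ h1) q
    rwa [hqs] at h2

lemma exp_const (E : A →ₗ[ℂ] A) (hp : ∀ x, 0 ≤ x → 0 ≤ E x) (h1 : E 1 = 1)
    {a : A} (ha : IsSelfAdjoint a)
    (hE : ∀ r : ℝ, E (exp ((r : ℂ) • a) * exp ((r : ℂ) • a)) = exp ((r : ℂ) • a) * exp ((r : ℂ) • a))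
    (x : A) (t : ℂ) :
    exp (t • (-a)) * E (exp (t • a) * x * exp (t • a)) * exp (t • (-a)) = E x := by
  let _ : NormedAlgebra ℚ A := .restrictScalars ℚ ℂ A
  let Ec : A →L[ℂ] A := E.mkContinuous 6 (pos_bound E h1 hp)
  let F : ℂ → A := fun t => exp (t • (-a)) * Ec (exp (t • a) * x * exp (t • a)) * exp (t • (-a))
  have hF : Differentiable ℂ F := by
    have := Ec.differentiable
    fun_prop
  have hinv : ∀ c d : ℂ, exp (c • a) * exp (d • a) = exp ((c + d) • a) := fun c d => by
    rw [add_smul, exp_add_of_commute]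
    exact (Commute.refl a).smul_left c |>.smul_right d
  have hneg : ∀ c : ℂ, c • (-a) = (-c) • a := fun c => by simp
  have hstar : ∀ c : ℂ, star (exp (c • a)) = exp (star c • a) := fun c => by
    rw [star_exp, star_smul, ha.star_eq]
  have hbd : Bornology.IsBounded (Set.range F) := by
    apply Metric.isBounded_closedBall (x := (0 : A)) (r := 6 * ‖x‖) |>.subset
    rintro - ⟨t, rfl⟩
    rw [mem_closedBall_zero_iff]
    set r : ℝ := t.re
    set s : ℂ := (t.im : ℂ) * Complex.I with hs
    have ht : t = r + s := (Complex.re_add_im t).symm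
    have hss : star s = -s := by simp [hs]
    have hrr : star (r : ℂ) = r := by simp
    set p := exp ((r : ℂ) • a)
    set q := exp ((-(r : ℂ)) • a)
    set u := exp (s • a)
    set v := exp ((-s) • a)
    have hu : u ∈ unitary A := by
      rw [Unitary.mem_iff, hstar, hss, hinv, hinv]; simp
    have hv : v ∈ unitary A := by
      rw [Unitary.mem_iff, hstar, star_neg, hss, hinv, hinv]; simp
    have e1 : exp (t • a) = p * u := by rw [hinv, ht]
    have e2 : exp (t • a) = u * p := by rw [hinv, ht, add_comm]
    have e3 : exp (t • (-a)) = v * q := by rw [hinv, hneg, ht]; congr 2; ring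
    have e4 : exp (t • (-a)) = q * v := by rw [hinv, hneg, ht]; congr 2; ring
    have e5 : F t = v * (q * E (p * (u * x * u) * p) * q) * v := by
      change exp (t • (-a)) * E (exp (t • a) * x * exp (t • a)) * exp (t • (-a)) = _
      have : exp (t • a) * x * exp (t • a) = p * (u * x * u) * p := by
        conv_lhs => enter [2]; rw [e2]
        rw [e1]; simp only [mul_assoc]
      rw [this]
      conv_lhs => enter [2]; rw [e4]
      rw [e3]; simp only [mul_assoc]
    rw [e5, CStarRing.norm_mul_mem_unitary _ hv, CStarRing.norm_mem_unitary_mul _ hv]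
    refine (sandwich_bound E hp ?_ ?_ ?_ ?_ (hE r) _).trans ?_
    · rw [hstar, hrr]
    · rw [hstar, star_neg, hrr]
    · rw [hinv]; simp
    · rw [hinv]; simp
    · rw [CStarRing.norm_mul_mem_unitary _ hu, CStarRing.norm_mem_unitary_mul _ hu]
  have := hF.apply_eq_apply_of_bounded hbd t 0
  simpa [F, Ec] using this

lemma jordan_sa (E : A →ₗ[ℂ] A) (hp : ∀ x, 0 ≤ x → 0 ≤ E x) (h1 : E 1 = 1)
    {a : A} (ha : IsSelfAdjoint a)
    (hE : ∀ r : ℝ, E (exp ((r : ℂ) • a) * exp ((r : ℂ) • a)) = exp ((r : ℂ) • a) * exp ((r : ℂ) • a))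
    (x : A) : E (a * x + x * a) = a * E x + E x * a := by
  let Ec : A →L[ℂ] A := E.mkContinuous 6 (pos_bound E h1 hp)
  have hd (b : A) : HasDerivAt (fun z : ℂ ↦ exp (z • b)) b 0 := by
    simpa using hasDerivAt_exp_smul_const b (0 : ℂ)
  have hin : HasDerivAt (fun t : ℂ => Ec (exp (t • a) * x * exp (t • a))) (E (a * x + x * a)) 0 := by
    have := ((hd a).mul_const x).mul (hd a)
    have h2 := Ec.hasFDerivAt.comp_hasDerivAt (0 : ℂ) this
    simpa [Ec, Function.comp_def] using! h2
  have h3 := ((hd (-a)).mul hin).mul (hd (-a))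
  have h4 : HasDerivAt (fun _ : ℂ => E x) 0 0 := hasDerivAt_const _ _
  have h5 := h3.unique (h4.congr_of_eventuallyEq (Filter.Eventually.of_forall fun t => by
    exact exp_const E hp h1 ha hE x t))
  simp [Ec] at h5
  rw [map_add, ← sub_eq_zero, ← h5]
  abel

end Jordan

section Tomiyama

open NormedSpace

variable {A : Type*} [CStarAlgebra A] [PartialOrder A] [StarOrderedRing A]

lemma sa_decomp (S : StarSubalgebra ℂ A) {a : A} (ha : a ∈ S) :
    ∃ b ∈ S, ∃ c ∈ S, IsSelfAdjoint b ∧ IsSelfAdjoint c ∧ a = b + Complex.I • c := by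
  have hc : ∀ (r : ℝ) (y : A), y ∈ S → r • y ∈ S := fun r y hy => by
    have := S.smul_mem hy (r : ℂ)
    simpa using this
  refine ⟨realPart a, ?_, imaginaryPart a, ?_, (realPart a).2, (imaginaryPart a).2,
    (realPart_add_I_smul_imaginaryPart a).symm⟩
  · rw [realPart_apply_coe]
    exact hc _ _ (add_mem ha (star_mem ha))
  · rw [imaginaryPart_apply_coe]
    exact S.smul_mem (hc _ _ (sub_mem ha (star_mem ha))) _

/-- Data of a positive unital projection onto a star subalgebra closed under exponentials. -/
structure IsProj (S : StarSubalgebra ℂ A) (E : A →ₗ[ℂ] A) : Prop where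
  ex : ∀ a ∈ S, exp a ∈ S
  one : E 1 = 1
  pos : ∀ x, 0 ≤ x → 0 ≤ E x
  mem : ∀ x, E x ∈ S
  fix : ∀ x ∈ S, E x = x

variable {S : StarSubalgebra ℂ A} {E : A →ₗ[ℂ] A} (h : IsProj S E)
include h

lemma IsProj.jordan {a : A} (ha : a ∈ S) (x : A) : E (a * x + x * a) = a * E x + E x * a := by
  have key : ∀ b ∈ S, IsSelfAdjoint b → E (b * x + x * b) = b * E x + E x * b := by
    intro b hb hbs
    refine jordan_sa E h.pos h.one hbs (fun r => ?_) x
    have := h.ex _ (S.smul_mem hb (r : ℂ))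
    exact h.fix _ (S.mul_mem this this)
  obtain ⟨b, hb, c, hc, hbs, hcs, rfl⟩ := sa_decomp S ha
  have e : (b + Complex.I • c) * x + x * (b + Complex.I • c)
      = (b * x + x * b) + Complex.I • (c * x + x * c) := by
    simp only [add_mul, mul_add, smul_mul_assoc, mul_smul_comm, smul_add]; abel
  rw [e, map_add, map_smul, key b hb hbs, key c hc hcs]
  simp only [add_mul, mul_add, smul_mul_assoc, mul_smul_comm, smul_add]; abel

lemma IsProj.unit2 {u v : A} (hu : u ∈ S) (hv : v ∈ S) (huv : u * v = 1) (hvu : v * u = 1)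
    (x : A) : E (v * x * u) + E (u * x * v) = v * E x * u + u * E x * v := by
  have h1 := h.jordan hu (v * x + x * v)
  rw [h.jordan hv x] at h1
  have e : ∀ y : A, u * (v * y + y * v) + (v * y + y * v) * u
      = (v * y * u + u * y * v) + (y + y) := by
    intro y
    have a1 : u * (v * y) = y := by rw [← mul_assoc, huv, one_mul]
    have a2 : y * v * u = y := by rw [mul_assoc, hvu, mul_one]
    rw [mul_add, add_mul, a1, a2, ← mul_assoc u y v]; abel
  rw [e, e, map_add, map_add] at h1
  rw [map_add] at h1
  exact add_right_cancel h1

variable {τ : A →ₗ[ℂ] ℂ} (ht : ∀ a ∈ S, ∀ b ∈ S, τ (a * b) = τ (b * a))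
  {C : ℝ} (hC : ∀ x ∈ S, ‖τ x‖ ≤ C * ‖x‖) (hC0 : 0 ≤ C)
include ht hC hC0

lemma IsProj.m_bound (x : A) : ‖τ (E x)‖ ≤ (C * 6) * ‖x‖ := by
  have h1 := hC _ (h.mem x)
  have h2 := pos_bound E h.one h.pos x
  nlinarith

lemma IsProj.m_conj {u v : A} (hu : u ∈ S) (huu : u ∈ unitary A) (hv : v = star u)
    (x : A) : τ (E (v * x * u)) = τ (E x) := by
  have hvS : v ∈ S := hv ▸ star_mem hu
  have huv : u * v = 1 := hv ▸ (Unitary.mem_iff.1 huu).2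
  have hvu : v * u = 1 := hv ▸ (Unitary.mem_iff.1 huu).1
  have hvv : v ∈ unitary A := hv ▸ Unitary.star_mem huu
  have k1 : ∀ y : A, τ (E (v * y * u)) + τ (E (u * y * v)) = τ (E y) + τ (E y) := by
    intro y
    rw [← map_add, h.unit2 hu hvS huv hvu, map_add,
      ht _ (S.mul_mem hvS (h.mem y)) _ hu, ht _ (S.mul_mem hu (h.mem y)) _ hvS,
      ← mul_assoc, ← mul_assoc, huv, hvu, one_mul]
  let L : ℕ → A := fun n => (fun y => v * y * u)^[n] x
  have hL1 : ∀ n, L (n + 1) = v * L n * u := fun n => Function.iterate_succ_apply' _ _ _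
  have hLn : ∀ n, ‖L n‖ = ‖x‖ := by
    intro n
    induction n with
    | zero => rfl
    | succ n ih =>
      rw [hL1, CStarRing.norm_mul_mem_unitary _ huu, CStarRing.norm_mem_unitary_mul _ hvv, ih]
  set d := τ (E (L 1)) - τ (E (L 0)) with hd
  have hstep : ∀ n, τ (E (L (n + 1))) - τ (E (L n)) = d := by
    intro n
    induction n with
    | zero => rfl
    | succ n ih =>
      have h2 := k1 (L (n + 1))
      rw [← hL1] at h2
      have h3 : u * L (n + 1) * v = L n := by
        rw [hL1, ← mul_assoc, ← mul_assoc, huv, one_mul, mul_assoc, huv, mul_one]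
      rw [h3] at h2
      linear_combination ih + h2
  have hlin : ∀ n : ℕ, τ (E (L n)) = τ (E (L 0)) + n * d := by
    intro n
    induction n with
    | zero => simp
    | succ n ih => push_cast; linear_combination ih + hstep n
  have hd0 : d = 0 := by
    by_contra hne
    have hpos : 0 < ‖d‖ := norm_pos_iff.2 hne
    obtain ⟨n, hn⟩ := exists_nat_gt (2 * ((C * 6) * ‖x‖) / ‖d‖)
    rw [div_lt_iff₀ hpos] at hn
    have h1 := h.m_bound ht hC hC0 (L n)
    have h2 := h.m_bound ht hC hC0 (L 0)
    rw [hLn] at h1 h2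
    have h3 : (n : ℂ) * d = τ (E (L n)) - τ (E (L 0)) := by rw [hlin n]; ring
    have h4 : (n : ℝ) * ‖d‖ = ‖τ (E (L n)) - τ (E (L 0))‖ := by rw [← h3]; simp
    have h5 := norm_sub_le (τ (E (L n))) (τ (E (L 0)))
    linarith
  have : τ (E (L 1)) = τ (E (L 0)) := by rw [← sub_eq_zero, ← hd, hd0]
  exact this

lemma IsProj.m_unit {u : A} (hu : u ∈ S) (huu : u ∈ unitary A) (x : A) :
    τ (E (x * u)) = τ (E (u * x)) := by
  have := h.m_conj ht hC hC0 hu huu rfl (u * x)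
  rwa [← mul_assoc, (Unitary.mem_iff.1 huu).1, one_mul] at this

lemma IsProj.m_sa {a : A} (ha : a ∈ S) (has : IsSelfAdjoint a) (x : A) :
    τ (E (x * a)) = τ (E (a * x)) := by
  let _ : NormedAlgebra ℚ A := .restrictScalars ℚ ℂ A
  let mc : A →L[ℂ] ℂ := (τ ∘ₗ E).mkContinuous (C * 6) (h.m_bound ht hC hC0)
  let mr : A →L[ℝ] ℂ := mc.restrictScalars ℝ
  set b := Complex.I • a with hb
  have hbS : b ∈ S := S.smul_mem ha _
  have hd : HasDerivAt (fun z : ℝ ↦ exp (z • b)) b 0 := by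
    simpa using hasDerivAt_exp_smul_const b (0 : ℝ)
  have d1 := mr.hasFDerivAt.comp_hasDerivAt (0 : ℝ) (hd.const_mul x)
  have d2 := mr.hasFDerivAt.comp_hasDerivAt (0 : ℝ) (hd.mul_const x)
  have hfun : (mr ∘ fun z : ℝ => x * exp (z • b)) = (mr ∘ fun z : ℝ => exp (z • b) * x) := by
    funext z
    change τ (E (x * exp (z • b))) = τ (E (exp (z • b) * x))
    refine h.m_unit ht hC hC0 (h.ex _ ?_) ?_ x
    · have := S.smul_mem hbS (z : ℂ)
      simpa using this
    · have hs : star (z • b) = -(z • b) := by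
        rw [star_smul, hb, star_smul, has.star_eq]; simp
      have hc : Commute (z • b) (-(z • b)) := (Commute.refl _).neg_right
      rw [Unitary.mem_iff, star_exp, hs, ← exp_add_of_commute hc, ← exp_add_of_commute hc.symm]
      simp
  rw [hfun] at d1
  have d3 : τ (E (x * b)) = τ (E (b * x)) := d1.unique d2
  rw [hb, mul_smul_comm, smul_mul_assoc, map_smul, map_smul, map_smul, map_smul] at d3
  exact smul_right_injective ℂ Complex.I_ne_zero d3

lemma IsProj.m_comm {a : A} (ha : a ∈ S) (x : A) : τ (E (x * a)) = τ (E (a * x)) := by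
  obtain ⟨b, hb, c, hc, hbs, hcs, rfl⟩ := sa_decomp S ha
  simp only [mul_add, add_mul, mul_smul_comm, smul_mul_assoc, map_add, map_smul]
  rw [h.m_sa ht hC hC0 hb hbs, h.m_sa ht hC hC0 hc hcs]

lemma IsProj.m_left {b : A} (hb : b ∈ S) (x : A) : τ (E (b * x)) = τ (b * E x) := by
  have h1 := congrArg τ (h.jordan hb x)
  rw [map_add, map_add, map_add, h.m_comm ht hC hC0 hb x, ht _ (h.mem x) _ hb] at h1
  linear_combination h1 / 2

lemma IsProj.m_star {c : A} (hc : c ∈ S) (x : A) :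
    τ (E (star c * x * c)) = τ (star c * E x * c) := by
  have hs : star c ∈ S := star_mem hc
  rw [h.m_comm ht hC hC0 hc, ← mul_assoc, h.m_left ht hC hC0 (S.mul_mem hc hs),
    ht _ (S.mul_mem hs (h.mem x)) _ hc, ← mul_assoc]

end Tomiyama

section Final

variable {H H2 : Type*}
  [NormedAddCommGroup H] [InnerProductSpace ℂ H] [CompleteSpace H]
  [NormedAddCommGroup H2] [InnerProductSpace ℂ H2] [CompleteSpace H2]

lemma condexp_isProj {N : VonNeumannAlgebra H} {E : B H →ₗ[ℂ] B H}
    (hE : IsConditionalExpectation H N E) : IsProj N.toStarSubalgebra E where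
  ex a ha := by
    let _ : NormedAlgebra ℚ (B H) := .restrictScalars ℚ ℂ (B H)
    refine mem_of_comm_commutant N fun b hb => ?_
    have h1 : Commute a b := (VonNeumannAlgebra.mem_commutant_iff.1 hb a ha)
    exact h1.exp_left
  one := hE.unital
  pos x hx := by
    rw [ContinuousLinearMap.nonneg_iff_isPositive] at hx ⊢
    exact hE.positive x hx
  mem := hE.mem_range
  fix := hE.fixes

lemma nonneg_of_inner {T : B H} (h : ∀ v, 0 ≤ ⟪v, T v⟫) : 0 ≤ T := by
  rw [ContinuousLinearMap.nonneg_iff_isPositive, ContinuousLinearMap.isPositive_iff_complex]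
  intro v
  have h1 := h v
  have h2 : ⟪T v, v⟫ = ⟪v, T v⟫ := by
    rw [← inner_conj_symm]
    exact (Complex.conj_eq_iff_im.2 (Complex.nonneg_iff.1 h1).2.symm)
  rw [h2]
  refine ⟨?_, (Complex.nonneg_iff.1 h1).1⟩
  exact Complex.ext rfl (by simpa using (Complex.nonneg_iff.1 h1).2)

lemma inner_of_nonneg {T : B H} (h : 0 ≤ T) (v : H) : 0 ≤ ⟪v, T v⟫ := by
  rw [ContinuousLinearMap.nonneg_iff_isPositive] at h
  exact h.inner_nonneg_right v

lemma HT.sl_polar (P : HT H H H2) (X : B H2) (x y : H) :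
    P.sl X x y = (1 / 4 : ℂ) • (P.sl X (x + y) (x + y) - P.sl X (x - y) (x - y)
      + Complex.I • (P.sl X (x - Complex.I • y) (x - Complex.I • y)
        - P.sl X (x + Complex.I • y) (x + Complex.I • y))) := by
  refine ContinuousLinearMap.ext fun b => ext_inner_left ℂ fun c => ?_
  simp only [ContinuousLinearMap.smul_apply, ContinuousLinearMap.add_apply,
    ContinuousLinearMap.sub_apply, inner_smul_right, inner_add_right, inner_sub_right,
    HT.inner_sl, map_add, map_sub, map_smul, LinearMap.add_apply, LinearMap.sub_apply,
    LinearMap.smul_apply, inner_add_left, inner_sub_left, inner_smul_left, Complex.conj_I]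
  ring_nf
  simp only [Complex.I_sq]
  ring

namespace DiscreteKacQG

variable (Q : DiscreteKacQG H H2)

lemma delta_eq (x : B H) : Q.Delta x = star Q.W * Q.sq.ampR x * Q.W := by
  rw [LCQG.Delta, LCQG.tensorOp_r]

lemma delta_inner_hasSum {ι : Type*} (e : HilbertBasis ι ℂ H) (x : B H) (k v : H) :
    HasSum (fun i => ⟪v, (star (Q.sq.sl Q.W (e i) k) * x * Q.sq.sl Q.W (e i) k) v⟫)
      ⟪v, Q.sq.sl (Q.Delta x) k k v⟫ := by
  have h := Q.sq.parseval e (Q.W (Q.sq.t k v)) (Q.sq.ampR x (Q.W (Q.sq.t k v)))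
  rw [HT.inner_sl, delta_eq]
  simp only [ContinuousLinearMap.mul_apply, star_inner_right]
  simpa only [HT.bra_ampR, HT.sl_apply] using h

variable {E : B H →ₗ[ℂ] B H} (hE : IsConditionalExpectation H Q.Mhat E)
include hE

lemma m_pos {x : B H} (hx : 0 ≤ x) : 0 ≤ Q.phihat (E x) := by
  rw [ContinuousLinearMap.nonneg_iff_isPositive] at hx
  exact Q.phihat_state.2 _ (hE.mem_range x) (hE.positive x hx)

lemma exists_bd : ∃ C : ℝ, 0 ≤ C ∧ ∀ X : B H, ‖Q.phihat X‖ ≤ C * ‖X‖ := by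
  obtain ⟨C, hC⟩ := normal_bound Q.phihat_normal
  refine ⟨|C|, abs_nonneg _, fun X => (hC X).trans ?_⟩
  gcongr
  exact le_abs_self C

lemma m_le {x : B H} (hx : 0 ≤ x) (k : H) :
    ((‖k‖ ^ 2 : ℝ) : ℂ) * Q.phihat (E x) ≤ Q.phihat (E (Q.sq.sl (Q.Delta x) k k)) := by
  obtain ⟨w, e, -⟩ := exists_hilbertBasis ℂ H
  obtain ⟨C, hC0, hC⟩ := Q.exists_bd hE
  refine hasSum_le_of_sum_le (Q.sum_adj e k (hE.mem_range x)) fun F => ?_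
  have h1 : ∀ i, Q.phihat (star (Q.sq.sl Q.W (e i) k) * E x * Q.sq.sl Q.W (e i) k)
      = Q.phihat (E (star (Q.sq.sl Q.W (e i) k) * x * Q.sq.sl Q.W (e i) k)) := fun i =>
    ((condexp_isProj hE).m_star Q.phihat_tracial (fun x _ => hC x) hC0 (Q.u_mem (e i) k) x).symm
  simp only [h1]
  rw [← map_sum, ← map_sum, ← sub_nonneg, ← map_sub, ← map_sub]
  refine Q.m_pos hE (nonneg_of_inner fun v => ?_)
  rw [ContinuousLinearMap.sub_apply, inner_sub_right, sub_nonneg, ContinuousLinearMap.sum_apply,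
    inner_sum]
  refine sum_le_hasSum F (fun i _ => ?_) (Q.delta_inner_hasSum e x k v)
  rw [ContinuousLinearMap.mul_apply, ContinuousLinearMap.mul_apply, star_inner_right]
  exact inner_of_nonneg hx _

/-- `x ↦ (ω_{k} ⊗ id)Δ(x)` as a linear map. -/
def adj (Q : DiscreteKacQG H H2) (k : H) : B H →ₗ[ℂ] B H where
  toFun x := Q.sq.sl (Q.Delta x) k k
  map_add' x y := by
    refine ContinuousLinearMap.ext fun b => ?_
    simp [LCQG.Delta, mul_add, add_mul, HT.sl_apply]
  map_smul' c x := by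
    refine ContinuousLinearMap.ext fun b => ?_
    simp [LCQG.Delta, HT.sl_apply]

omit hE in
lemma adj_one (k : H) : Q.adj k 1 = ((‖k‖ ^ 2 : ℝ) : ℂ) • 1 := by
  change Q.sq.sl (Q.Delta 1) k k = _
  rw [delta_eq, HT.ampR_one, mul_one, Q.W_unitary_l, ← HT.ampR_one Q.sq, HT.sl_ampR, inner_self_C]

lemma m_adj_pos {x : B H} (hx : 0 ≤ x) (k : H) :
    Q.phihat (E (Q.adj k x)) = ((‖k‖ ^ 2 : ℝ) : ℂ) * Q.phihat (E x) := by
  refine le_antisymm ?_ (Q.m_le hE hx k)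
  have h0 : 0 ≤ algebraMap ℝ (B H) ‖x‖ - x :=
    sub_nonneg.2 (IsSelfAdjoint.le_algebraMap_norm_self (a := x) (IsSelfAdjoint.of_nonneg hx))
  have h1 := Q.m_le hE h0 k
  change _ ≤ Q.phihat (E (Q.adj k _)) at h1
  have e : algebraMap ℝ (B H) ‖x‖ = (‖x‖ : ℂ) • (1 : B H) := by
    rw [IsScalarTower.algebraMap_apply ℝ ℂ (B H), Algebra.algebraMap_eq_smul_one]; rfl
  rw [e] at h1
  simp only [map_sub, map_smul, adj_one, hE.unital, Q.phihat_state.1, smul_eq_mul] at h1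
  rw [← sub_nonneg] at h1 ⊢
  convert h1 using 1
  ring

lemma m_adj (x : B H) (k : H) :
    Q.phihat (E (Q.adj k x)) = ((‖k‖ ^ 2 : ℝ) : ℂ) * Q.phihat (E x) := by
  have hsa : ∀ a : B H, IsSelfAdjoint a →
      Q.phihat (E (Q.adj k a)) = ((‖k‖ ^ 2 : ℝ) : ℂ) * Q.phihat (E a) := by
    intro a ha
    have h0 : 0 ≤ a + algebraMap ℝ (B H) ‖a‖ :=
      neg_le_iff_add_nonneg.1 (IsSelfAdjoint.neg_algebraMap_norm_le_self (a := a) ha)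
    have e : algebraMap ℝ (B H) ‖a‖ = (‖a‖ : ℂ) • (1 : B H) := by
      rw [IsScalarTower.algebraMap_apply ℝ ℂ (B H), Algebra.algebraMap_eq_smul_one]; rfl
    have h1 := Q.m_adj_pos hE h0 k
    rw [e] at h1
    simp only [map_add, map_smul, adj_one, hE.unital, Q.phihat_state.1, smul_eq_mul] at h1
    linear_combination h1
  have e := realPart_add_I_smul_imaginaryPart x
  have h1 := hsa _ (realPart x).2
  have h2 := hsa _ (imaginaryPart x).2
  rw [← e]
  simp only [map_add, map_smul, smul_eq_mul]
  rw [h1, h2]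
  ring

lemma m_sl (x : B H) (η ξ : H) :
    Q.phihat (E (Q.sq.sl (Q.Delta x) η ξ)) = ⟪η, ξ⟫ * Q.phihat (E x) := by
  have h := fun k => Q.m_adj hE x k
  change ∀ k, Q.phihat (E (Q.sq.sl (Q.Delta x) k k)) = _ at h
  rw [HT.sl_polar, polar_C]
  simp only [map_smul, map_add, map_sub, h, smul_eq_mul]
  ring

lemma m_slice (x : B H) {ω : B H →ₗ[ℂ] ℂ} (hω : IsNormalFunctional H ω) :
    Q.phihat (E (Q.sliceL ω (Q.Delta x))) = ω 1 * Q.phihat (E x) := by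
  obtain ⟨C, hC0, hC⟩ := Q.exists_bd hE
  obtain ⟨ξ, η, h1, h2, h3⟩ := hω
  let mc : B H →L[ℂ] ℂ := (Q.phihat ∘ₗ E).mkContinuous (C * 6)
    ((condexp_isProj hE).m_bound Q.phihat_tracial (fun x _ => hC x) hC0)
  have h4 := mc.hasSum (Q.sliceL_hasSum h1 h2 h3 (Q.Delta x))
  have h5 := (h3 1).mul_right (Q.phihat (E x))
  have h6 : (fun n => mc (Q.sq.sl (Q.Delta x) (η n) (ξ n)))
      = fun n => ⟪η n, (1 : B H) (ξ n)⟫ * Q.phihat (E x) := by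
    funext n
    exact Q.m_sl hE x (η n) (ξ n)
  rw [h6] at h4
  exact h4.unique h5

end DiscreteKacQG

end Final

/-- Let `𝔾` be a discrete quantum group of Kac type and `E` a conditional expectation of
`B(L²(𝔾))` onto `L∞(𝔾̂)`.  Then `m := φ̂ ∘ E|_{L∞(𝔾)}` is a left-invariant mean on
`L∞(𝔾)`, where `φ̂` is the (tracial) Haar state of the compact dual `𝔾̂`. -/
theorem haar_comp_expectation_is_mean (Q : DiscreteKacQG H H2)
    (E : B H →ₗ[ℂ] B H) (hE : IsConditionalExpectation H Q.Mhat E) :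
    Q.toLCQG.IsLeftInvariantMean (Q.phihat ∘ₗ E) := by
  refine ⟨⟨?_, ?_⟩, ?_⟩
  · rw [LinearMap.comp_apply, hE.unital, Q.phihat_state.1]
  · intro x _ hx
    exact Q.phihat_state.2 _ (hE.mem_range x) (hE.positive x hx)
  · intro x _ ω hω
    exact Q.m_slice hE x hω

end LCQGNote
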